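/- arXiv:0902.0433 — 4 statements merged into one kernel-verified Lean document; each statement's English description precedes it below -/
import Mathlib

section
/- For every v ∈ Ω and every n ≥ 1 there exists exactly one strictly increasing sequence (cᵢ)_{i∈ℤ} of integers with c₀ ≤ 0 < c₁, tending to +∞ as i → +∞ and to −∞ as i → −∞, such that for every i ∈ ℤ either c_{i+1} − cᵢ = q_{n−1} and (v(cᵢ+1), …, v(c_{i+1})) = s_{n−1}, or c_{i+1} − cᵢ = qₙ and (v(cᵢ+1), …, v(c_{i+1})) = sₙ. (This is the unique (n−1, n)-partition of v.) -/
open scoped Classical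

noncomputable section

/-- The Gauss map. -/
def gaussMap (x : ℝ) : ℝ := Int.fract x⁻¹

/-- `pq α k` is the partial quotient `a_{k+1}` of the continued fraction of `α`. -/
def pq (α : ℝ) (k : ℕ) : ℕ := ⌊(gaussMap^[k] α)⁻¹⌋₊

/-- `qd α (n+1)` is the convergent denominator `q_n`; `qd α 0 = q_{-1} = 0`, `qd α 1 = q₀ = 1`. -/
def qd (α : ℝ) : ℕ → ℕ
  | 0 => 0
  | 1 => 1
  | (n+2) => pq α n * qd α (n+1) + qd α n

/-- The circle map sequence of rotation number `α` (value `true` means letter `1`). -/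
def v0 (α : ℝ) (n : ℤ) : Bool := decide (1 - α ≤ Int.fract ((n : ℝ) * α))

/-- The word `(v₀(m+1), …, v₀(m+n))`. -/
def word (α : ℝ) (m n : ℕ) : List Bool :=
  (List.range n).map (fun i => v0 α ((m : ℤ) + 1 + i))

/-- `w` is a factor (admissible word) of `v₀`. -/
def IsFactor (α : ℝ) (w : List Bool) : Prop := ∃ m : ℕ, w = word α m w.length

/-- `w` occurs as a subword of the prefix `(v₀(1), …, v₀(N))`. -/
def OccursIn (α : ℝ) (w : List Bool) (N : ℕ) : Prop :=
  ∃ m : ℕ, m + w.length ≤ N ∧ w = word α m w.length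

/-- `exhaust α n` is `f(n)`: the least `N` such that every factor of length `n`
occurs in `(v₀(1), …, v₀(N))`. -/
def exhaust (α : ℝ) (n : ℕ) : ℕ :=
  sInf {N | ∀ w : List Bool, w.length = n → IsFactor α w → OccursIn α w N}

/-- number of occurrences of `w` in the prefix `(v₀(1), …, v₀(N))`. -/
def occCount (α : ℝ) (w : List Bool) (N : ℕ) : ℕ :=
  ((Finset.range N).filter (fun m => m + w.length ≤ N ∧ word α m w.length = w)).card

/-- the word `(v(m), v(m+1), …, v(m+n-1))` of a two-sided sequence. -/
def wordAt (v : ℤ → Bool) (m : ℤ) (n : ℕ) : List Bool :=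
  (List.range n).map (fun i => v (m + i))

/-- the hull `Ω`: closure of the set of translates of `v₀`. -/
def hull (α : ℝ) : Set (ℤ → Bool) :=
  closure {u | ∃ m : ℤ, u = fun n => v0 α (n - m)}


/-- `sw α (n+1)` is the word `sₙ`: `sw α 0 = s₋₁ = 1`, `sw α 1 = s₀ = 0`,
`sw α 2 = s₁ = s₀^{a₁-1} s₋₁`, and `s_{n+1} = sₙ^{a_{n+1}} s_{n-1}`. -/
def sw (α : ℝ) : ℕ → List Bool
  | 0 => [true]
  | 1 => [false]
  | 2 => (List.replicate (pq α 0 - 1) [false]).flatten ++ [true]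
  | (n+3) => (List.replicate (pq α (n+1)) (sw α (n+2))).flatten ++ sw α (n+1)

/-- The block of the partition `c` starting at index `i` is the word `s_{lev - 1}`
(of length `q_{lev-1} = qd α lev`), occupying sites `c i + 1, …, c (i+1)` of `v`. -/
def BlockIs (α : ℝ) (v : ℤ → Bool) (c : ℤ → ℤ) (i : ℤ) (lev : ℕ) : Prop :=
  c (i + 1) - c i = (qd α lev : ℤ) ∧ wordAt v (c i + 1) (qd α lev) = sw α lev

/-- `c` is an `(n-1, n)`-partition of `v`: a strictly increasing two-sided sequence of
cut points, with `c 0 ≤ 0 < c 1`, tending to `±∞`, each of whose blocks is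
`s_{n-1}` or `sₙ`. -/
def IsPartition (α : ℝ) (v : ℤ → Bool) (n : ℕ) (c : ℤ → ℤ) : Prop :=
  StrictMono c ∧ c 0 ≤ 0 ∧ 0 < c 1 ∧
  Filter.Tendsto c Filter.atTop Filter.atTop ∧
  Filter.Tendsto c Filter.atBot Filter.atBot ∧
  ∀ i : ℤ, BlockIs α v c i n ∨ BlockIs α v c i (n + 1)

theorem wordAt_eq_map (v : ℤ → Bool) (m : ℤ) (n : ℕ) :
    wordAt v m n = (List.range n).map (fun i : ℕ => v (m + (i : ℤ))) := by
  simp [wordAt, ← List.map_eq_flatMap, Function.comp_def]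

theorem wordAt_length (v : ℤ → Bool) (m : ℤ) (n : ℕ) : (wordAt v m n).length = n := by
  simp [wordAt_eq_map]

theorem wordAt_add (v : ℤ → Bool) (m : ℤ) (a b : ℕ) :
    wordAt v m (a + b) = wordAt v m a ++ wordAt v (m + a) b := by
  simp [wordAt_eq_map, List.range_add, Function.comp_def, add_assoc]

theorem wordAt_translate (v : ℤ → Bool) (m k : ℤ) (n : ℕ) :
    wordAt (fun i => v (i - m)) (k + 1) n = wordAt v (k - m + 1) n := by
  rw [wordAt_eq_map, wordAt_eq_map]
  congr 1
  funext i
  congr 1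
  ring

theorem wordAt_append_eq_iff (v : ℤ → Bool) (m : ℤ) (X Y : List Bool) :
    wordAt v m (X ++ Y).length = X ++ Y ↔
      wordAt v m X.length = X ∧ wordAt v (m + X.length) Y.length = Y := by
  rw [List.length_append, wordAt_add]
  exact ⟨fun h => List.append_inj h (wordAt_length _ _ _), fun h => by rw [h.1, h.2]⟩

/-- The word `W ^ a U`. -/
def powAppend (a : ℕ) (W U : List Bool) : List Bool := (List.replicate a W).flatten ++ U

theorem powAppend_length (a : ℕ) (W U : List Bool) :
    (powAppend a W U).length = a * W.length + U.length := by
  simp [powAppend]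

theorem wordAt_powAppend_eq_iff (v : ℤ → Bool) (a : ℕ) (W U : List Bool) (m : ℤ) :
    wordAt v m (powAppend a W U).length = powAppend a W U ↔
      (∀ j < a, wordAt v (m + j * W.length) W.length = W) ∧
        wordAt v (m + a * W.length) U.length = U := by
  induction a generalizing m with
  | zero => simp [powAppend]
  | succ a ih =>
    have h : powAppend (a + 1) W U = W ++ powAppend a W U := by
      simp [powAppend, List.replicate_succ]
    rw [h, wordAt_append_eq_iff, ih, Nat.forall_lt_succ_left]
    simp only [Nat.cast_zero, zero_mul, add_zero, and_assoc, Nat.cast_add, Nat.cast_one]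
    simp only [show ∀ j : ℤ, m + W.length + j * W.length = m + (j + 1) * W.length by
      intro j; ring]

/-- `A` and `B` are the sets of left cut points of the `U`-blocks and of the `W`-blocks of a
tiling of the two-sided sequence `v`. -/
structure Tiling (v : ℤ → Bool) (U W : List Bool) (A B : Set ℤ) : Prop where
  word_left : ∀ k ∈ A, wordAt v (k + 1) U.length = U
  word_right : ∀ k ∈ B, wordAt v (k + 1) W.length = W
  cover : ∀ x : ℤ, (∃ k ∈ A, k ≤ x ∧ x < k + U.length) ∨ (∃ k ∈ B, k ≤ x ∧ x < k + W.length)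
  sep_left : ∀ k ∈ A, ∀ l ∈ A, k < l → k + U.length ≤ l
  sep_right : ∀ k ∈ B, ∀ l ∈ B, k < l → k + W.length ≤ l
  sep : ∀ k ∈ A, ∀ l ∈ B, k + U.length ≤ l ∨ l + W.length ≤ k

namespace Tiling

variable {v : ℤ → Bool} {U W : List Bool} {A B : Set ℤ}

theorem translate (h : Tiling v U W A B) (m : ℤ) :
    Tiling (fun n => v (n - m)) U W {k | k - m ∈ A} {k | k - m ∈ B} where
  word_left k hk := by
    rw [wordAt_translate]
    exact h.word_left _ hk
  word_right k hk := by
    rw [wordAt_translate]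
    exact h.word_right _ hk
  cover x := by
    rcases h.cover (x - m) with ⟨k, hk, h1, h2⟩ | ⟨k, hk, h1, h2⟩
    · exact .inl ⟨k + m, by simpa using hk, by omega, by omega⟩
    · exact .inr ⟨k + m, by simpa using hk, by omega, by omega⟩
  sep_left k hk l hl hkl := by
    have := h.sep_left _ hk _ hl (by omega)
    omega
  sep_right k hk l hl hkl := by
    have := h.sep_right _ hk _ hl (by omega)
    omega
  sep k hk l hl := by
    have := h.sep _ hk _ hl
    omega

theorem ne_of_mem (h : Tiling v U W A B) (hU : 0 < U.length) (hW : 0 < W.length) {k l : ℤ}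
    (hk : k ∈ A) (hl : l ∈ B) : k ≠ l := by
  have := h.sep k hk l hl
  omega

theorem left_add_le (h : Tiling v U W A B) {k l : ℤ} (hk : k ∈ A) (hl : l ∈ A ∪ B)
    (hkl : k < l) : k + U.length ≤ l := by
  rcases hl with hl | hl
  · exact h.sep_left k hk l hl hkl
  · have := h.sep k hk l hl
    omega

theorem right_add_le (h : Tiling v U W A B) {k l : ℤ} (hk : k ∈ B) (hl : l ∈ A ∪ B)
    (hkl : k < l) : k + W.length ≤ l := by
  rcases hl with hl | hl
  · have := h.sep l hl k hk
    omega
  · exact h.sep_right k hk l hl hkl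

/-- Cut the blocks `W ^ a U` of a tiling into blocks `W` and `U`. -/
theorem subdivide {a : ℕ} (h : Tiling v W (powAppend a W U) A B) (hU : 0 < U.length)
    (hW : 0 < W.length) :
    Tiling v U W {k | k - a * W.length ∈ B}
      {k | k ∈ A ∨ ∃ j < a, k - (j : ℤ) * W.length ∈ B} := by
  have hlen : ((powAppend a W U).length : ℤ) = a * W.length + U.length := by
    rw [powAppend_length]; push_cast; ring
  have hmul : ∀ i j : ℕ, i < j → (i : ℤ) * W.length + W.length ≤ j * W.length := by
    intro i j hij
    have : (i + 1) * W.length ≤ j * W.length := Nat.mul_le_mul_right _ hij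
    zify at this
    linarith
  have hnn : ∀ i : ℕ, 0 ≤ (i : ℤ) * W.length := fun i => by positivity
  refine ⟨?_, ?_, ?_, ?_, ?_, ?_⟩
  · intro k hk
    have := ((wordAt_powAppend_eq_iff _ _ _ _ _).1 (h.word_right _ hk)).2
    rwa [show k - a * W.length + 1 + a * W.length = k + 1 by ring] at this
  · rintro k (hk | ⟨j, hj, hk⟩)
    · exact h.word_left k hk
    · have := ((wordAt_powAppend_eq_iff _ _ _ _ _).1 (h.word_right _ hk)).1 j hj
      rwa [show k - j * W.length + 1 + j * W.length = k + 1 by ring] at this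
  · intro x
    rcases h.cover x with ⟨k, hk, h1, h2⟩ | ⟨k, hk, h1, h2⟩
    · exact .inr ⟨k, .inl hk, h1, h2⟩
    · rw [hlen] at h2
      rcases lt_or_ge x (k + a * W.length) with hx | hx
      · obtain ⟨y, rfl⟩ : ∃ y : ℕ, x = k + y := ⟨(x - k).toNat, by omega⟩
        have hy : y < a * W.length := by zify; linarith
        refine .inr ⟨k + ((y / W.length : ℕ) : ℤ) * W.length,
          .inr ⟨y / W.length, (Nat.div_lt_iff_lt_mul hW).2 hy, by simpa using hk⟩, ?_, ?_⟩
        · have := Nat.div_mul_le_self y W.length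
          zify at this
          push_cast
          linarith
        · have := Nat.lt_div_mul_add hW (a := y)
          zify at this
          push_cast
          linarith
      · exact .inl ⟨k + a * W.length, by simpa using hk, hx, by linarith⟩
  · intro k hk l hl hkl
    have := h.sep_right _ hk _ hl (by omega)
    have := hnn a
    omega
  · rintro k (hk | ⟨i, hi, hk⟩) l (hl | ⟨j, hj, hl⟩) hkl
    · exact h.sep_left k hk l hl hkl
    · have := h.sep _ hk _ hl
      have := hmul j a hj
      have := hnn j
      omega
    · have := h.sep _ hl _ hk
      have := hmul i a hi
      have := hnn i
      omega
    · have h1 := h.sep_right _ hk _ hl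
      have h2 := h.sep_right _ hl _ hk
      have := hmul i a hi
      have := hmul j a hj
      have := hnn i
      have := hnn j
      rcases lt_trichotomy i j with hij | rfl | hij
      · have := hmul i j hij
        omega
      · omega
      · have := hmul j i hij
        omega
  · rintro k hk l (hl | ⟨j, hj, hl⟩)
    · have := h.sep _ hl _ hk
      have := hnn a
      omega
    · have h1 := h.sep_right _ hk _ hl
      have h2 := h.sep_right _ hl _ hk
      have := hmul j a hj
      have := hnn j
      have := hnn a
      omega

/-- The cut points met by a string of `a` blocks `W` followed by a block `U`. -/
theorem exists_eq_add_mul (h : Tiling v U W A B) {a : ℕ} (hW : 0 < W.length) {k l : ℤ}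
    (hk : k + a * W.length ∈ A) (hB : ∀ j < a, k + (j : ℤ) * W.length ∈ B) (hl : l ∈ A ∪ B)
    (hkl : k ≤ l) (hlk : l < k + a * W.length + U.length) :
    ∃ j ≤ a, l = k + (j : ℤ) * W.length := by
  rcases lt_or_ge l (k + a * W.length) with hx | hx
  · obtain ⟨y, rfl⟩ : ∃ y : ℕ, l = k + y := ⟨(l - k).toNat, by omega⟩
    have hy : y < a * W.length := by zify; linarith
    have hlt : y / W.length < a := (Nat.div_lt_iff_lt_mul hW).2 hy
    refine ⟨y / W.length, hlt.le, ?_⟩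
    have h1 := Nat.div_mul_le_self y W.length
    have h2 := Nat.lt_div_mul_add hW (a := y)
    zify at h1 h2
    have h3 := h.right_add_le (hB _ hlt) hl
    push_cast at h3
    push_cast
    by_contra hne
    have := h3 (lt_of_le_of_ne (by linarith) (Ne.symm hne))
    linarith
  · refine ⟨a, le_rfl, ?_⟩
    by_contra hne
    have := h.left_add_le hk hl (lt_of_le_of_ne hx (Ne.symm hne))
    linarith

/-- If every block `U` of a tiling is preceded by `a` blocks `W`, merge them into `W ^ a U`. -/
theorem coarsen {a : ℕ} (h : Tiling v U W A B) (hU : 0 < U.length) (hW : 0 < W.length)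
    (hprev : ∀ k ∈ A, ∀ j : ℕ, 1 ≤ j → j ≤ a → k - (j : ℤ) * W.length ∈ B) :
    Tiling v W (powAppend a W U)
      {k | k ∈ B ∧ ∀ j : ℕ, 1 ≤ j → j ≤ a → k + (j : ℤ) * W.length ∉ A}
      {k | k + a * W.length ∈ A} := by
  have hlen : ((powAppend a W U).length : ℤ) = a * W.length + U.length := by
    rw [powAppend_length]; push_cast; ring
  have hnn : ∀ i : ℕ, 0 ≤ (i : ℤ) * W.length := fun i => by positivity
  have hB : ∀ k : ℤ, k + a * W.length ∈ A → ∀ j < a, k + (j : ℤ) * W.length ∈ B := by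
    intro k hk j hj
    have := hprev _ hk (a - j) (by omega) (by omega)
    rwa [Nat.cast_sub hj.le,
      show k + a * (W.length : ℤ) - (a - j) * W.length = k + j * W.length by ring] at this
  have hC : ∀ k : ℤ, k + a * W.length ∈ A → k ∈ A ∪ B := by
    intro k hk
    rcases Nat.eq_zero_or_pos a with rfl | ha
    · exact .inl (by simpa using hk)
    · exact .inr (by simpa using hB k hk 0 ha)
  refine ⟨fun k hk => h.word_right k hk.1, ?_, ?_, fun k hk l hl => h.sep_right k hk.1 l hl.1,
    ?_, ?_⟩
  · intro k hk
    refine (wordAt_powAppend_eq_iff _ _ _ _ _).2 ⟨fun j hj => ?_, ?_⟩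
    · rw [add_right_comm]
      exact h.word_right _ (hB k hk j hj)
    · rw [add_right_comm]
      exact h.word_left _ hk
  · intro x
    rcases h.cover x with ⟨k, hk, h1, h2⟩ | ⟨k, hk, h1, h2⟩
    · refine .inr ⟨k - a * W.length, by simpa using hk, ?_, ?_⟩
      · have := hnn a
        omega
      · omega
    · by_cases hj : ∃ j : ℕ, 1 ≤ j ∧ j ≤ a ∧ k + (j : ℤ) * W.length ∈ A
      · obtain ⟨j, hj1, hja, hj⟩ := hj
        refine .inr ⟨k + j * W.length - a * W.length, by simpa using hj, ?_, ?_⟩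
        · have : j * W.length ≤ a * W.length := Nat.mul_le_mul_right _ hja
          zify at this
          omega
        · have : 1 * W.length ≤ j * W.length := Nat.mul_le_mul_right _ hj1
          zify at this
          omega
      · push Not at hj
        exact .inl ⟨k, ⟨hk, hj⟩, h1, h2⟩
  · intro k hk l hl hkl
    by_contra hlt
    obtain ⟨j, hja, rfl⟩ := h.exists_eq_add_mul hW hk (hB k hk) (hC l hl) hkl.le (by omega)
    have hj : 0 < j := by
      rcases Nat.eq_zero_or_pos j with rfl | hj
      · simp at hkl
      · exact hj
    have := hB _ hl (a - j) (by omega)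
    rw [Nat.cast_sub hja,
      show k + j * (W.length : ℤ) + (a - j) * W.length = k + a * W.length by ring] at this
    exact h.ne_of_mem hU hW hk this rfl
  · rintro k ⟨hk, hkA⟩ l hl
    by_contra! hlt
    rcases lt_or_ge k l with hkl | hkl
    · have := h.right_add_le hk (hC l hl) hkl
      omega
    · obtain ⟨j, hja, rfl⟩ := h.exists_eq_add_mul hW hl (hB l hl) (.inr hk) hkl (by omega)
      rcases hja.eq_or_lt with rfl | hja
      · exact h.ne_of_mem hU hW hl hk rfl
      · refine hkA (a - j) (by omega) (by omega) ?_
        rwa [Nat.cast_sub hja.le,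
          show l + j * (W.length : ℤ) + (a - j) * W.length = l + a * W.length by ring]

/-- Uniqueness of tilings passes from the pair `(U, W)` to the pair `(W, W ^ a U)`. -/
theorem unique_powAppend {a : ℕ} (hU : 0 < U.length) (hW : 0 < W.length)
    (huniq : ∀ A B A' B' : Set ℤ, Tiling v U W A B → Tiling v U W A' B' → A = A' ∧ B = B')
    {A' B' : Set ℤ} (h : Tiling v W (powAppend a W U) A B)
    (h' : Tiling v W (powAppend a W U) A' B') : A = A' ∧ B = B' := by
  obtain ⟨h1, h2⟩ := huniq _ _ _ _ (h.subdivide hU hW) (h'.subdivide hU hW)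
  have hBB : B = B' := by
    ext k
    have := Set.ext_iff.1 h1 (k + a * W.length)
    simpa using this
  subst hBB
  refine ⟨?_, rfl⟩
  have hlen : ((powAppend a W U).length : ℤ) = a * W.length + U.length := by
    rw [powAppend_length]; push_cast; ring
  have hsub : ∀ A A' : Set ℤ, Tiling v W (powAppend a W U) A B →
      {k | k ∈ A ∨ ∃ j < a, k - (j : ℤ) * W.length ∈ B} =
        {k | k ∈ A' ∨ ∃ j < a, k - (j : ℤ) * W.length ∈ B} → A ⊆ A' := by
    intro A A' h h2 k hk
    rcases (Set.ext_iff.1 h2 k).1 (.inl hk) with hk' | ⟨j, hj, hkj⟩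
    · exact hk'
    · exfalso
      have := h.sep _ hk _ hkj
      have h3 : (j + 1) * W.length ≤ a * W.length := Nat.mul_le_mul_right _ hj
      zify at h3
      have : 0 ≤ (j : ℤ) * W.length := by positivity
      rw [add_mul] at h3
      omega
  exact (hsub _ _ h h2).antisymm (hsub _ _ h' h2.symm)

end Tiling

/-- The integers `k` such that `k α` lies in `[lo, hi)` modulo one. -/
def orbitIn (α lo hi : ℝ) : Set ℤ := {k | ∃ m : ℤ, lo ≤ k * α - m ∧ k * α - m < hi}

theorem add_mul_mem_orbitIn_iff {α lo hi t : ℝ} {w : ℕ} {P : ℤ} (hw : w * α = P + t) (k : ℤ)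
    (j : ℕ) : k + (j : ℤ) * w ∈ orbitIn α lo hi ↔ k ∈ orbitIn α (lo - j * t) (hi - j * t) := by
  have key : ((k + (j : ℤ) * w : ℤ) : ℝ) * α = k * α + j * P + j * t := by
    push_cast
    linear_combination (j : ℝ) * hw
  constructor
  · rintro ⟨m, h1, h2⟩
    refine ⟨m - j * P, ?_, ?_⟩ <;> rw [key] at h1 h2 <;> push_cast <;> linarith
  · rintro ⟨m, h1, h2⟩
    refine ⟨m + j * P, ?_, ?_⟩ <;> rw [key] <;> push_cast at * <;> linarith

theorem sub_mul_mem_orbitIn_iff {α lo hi t : ℝ} {w : ℕ} {P : ℤ} (hw : w * α = P + t) (k : ℤ)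
    (j : ℕ) : k - (j : ℤ) * w ∈ orbitIn α lo hi ↔ k ∈ orbitIn α (lo + j * t) (hi + j * t) := by
  rw [← sub_add_cancel k ((j : ℤ) * w), add_mul_mem_orbitIn_iff hw]
  simp

theorem orbitIn_mono {α lo hi lo' hi' : ℝ} (h1 : lo' ≤ lo) (h2 : hi ≤ hi') :
    orbitIn α lo hi ⊆ orbitIn α lo' hi' :=
  fun _ ⟨m, h, h'⟩ => ⟨m, h1.trans h, h'.trans_le h2⟩

theorem int_eq_of_sub_lt {x lo hi : ℝ} (h : hi - lo ≤ 1) {m n : ℤ} (h1 : lo ≤ x - m)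
    (h2 : x - m < hi) (h3 : lo ≤ x - n) (h4 : x - n < hi) : m = n := by
  have h5 : m < n + 1 := by
    have : (m : ℝ) < n + 1 := by linarith
    exact_mod_cast this
  have h6 : n < m + 1 := by
    have : (n : ℝ) < m + 1 := by linarith
    exact_mod_cast this
  omega

namespace Tiling

variable {v : ℤ → Bool} {U W : List Bool}

/-- Renormalization of the tiling of a rotation orbit when `W` moves the orbit to the right. -/
theorem coarsen_orbitIn_right {α p r : ℝ} {a : ℕ} {P : ℤ} (hU : 0 < U.length)
    (hW : 0 < W.length) (hr : 0 < r) (hpr : p + r ≤ 1) (ha : a * r ≤ p)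
    (hPr : W.length * α = P + r)
    (h : Tiling v U W (orbitIn α (p - r) p) (orbitIn α (-r) (p - r))) :
    Tiling v W (powAppend a W U) (orbitIn α (-r) ((p - a * r) - r))
      (orbitIn α ((p - a * r) - r) (p - a * r)) := by
  have hjr : ∀ j : ℕ, j ≤ a → (j : ℝ) * r ≤ a * r := fun j hj => by gcongr
  convert h.coarsen (a := a) hU hW ?_ using 1
  · ext k
    constructor
    · rintro ⟨m, h1, h2⟩
      refine ⟨⟨m, h1, ?_⟩, fun j hj1 hja hmem => ?_⟩
      · have := hjr 0 (Nat.zero_le _)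
        push_cast at this
        linarith
      · obtain ⟨n, h3, h4⟩ := (add_mul_mem_orbitIn_iff hPr k j).1 hmem
        have h5 := hjr j hja
        have h6 : 0 ≤ (j : ℝ) * r := by positivity
        have hmn : m = n := by
          refine int_eq_of_sub_lt (x := k * α + j * r) (lo := -r) (hi := p) (by linarith) ?_ ?_ ?_ ?_
          all_goals linarith
        subst hmn
        linarith
    · rintro ⟨⟨m, h1, h2⟩, hA⟩
      refine ⟨m, h1, ?_⟩
      by_contra! hge
      have hc : 1 < (p - (k * α - m)) / r := by rw [lt_div_iff₀ hr]; linarith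
      have hc' : (p - (k * α - m)) / r ≤ (a + 1 : ℕ) := by
        rw [div_le_iff₀ hr]; push_cast; linarith
      have h3 : 1 < ⌈(p - (k * α - m)) / r⌉₊ := Nat.lt_ceil.2 (by exact_mod_cast hc)
      obtain ⟨j, hj⟩ : ∃ j, ⌈(p - (k * α - m)) / r⌉₊ = j + 1 := ⟨_, (Nat.succ_pred_eq_of_pos
        (by omega)).symm⟩
      have h4 : j + 1 ≤ a + 1 := hj ▸ Nat.ceil_le.2 hc'
      refine hA j (by omega) (by omega) ((add_mul_mem_orbitIn_iff hPr k j).2 ⟨m, ?_, ?_⟩)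
      · have := Nat.le_ceil ((p - (k * α - m)) / r)
        rw [hj, div_le_iff₀ hr] at this
        push_cast at this
        linarith
      · have : j < ⌈(p - (k * α - m)) / r⌉₊ := by omega
        rw [Nat.lt_ceil, lt_div_iff₀ hr] at this
        linarith
  · ext k
    rw [Set.mem_ofPred_eq, add_mul_mem_orbitIn_iff hPr, sub_right_comm]
  · intro k hk j hj1 hja
    rw [sub_mul_mem_orbitIn_iff hPr]
    have h5 := hjr j hja
    have h6 : (1 : ℝ) * r ≤ j * r := by gcongr; exact_mod_cast hj1
    exact orbitIn_mono (by linarith) (by linarith) hk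

/-- Renormalization of the tiling of a rotation orbit when `W` moves the orbit to the left. -/
theorem coarsen_orbitIn_left {α p r : ℝ} {a : ℕ} {P : ℤ} (hU : 0 < U.length)
    (hW : 0 < W.length) (hr : 0 < r) (hpr : p + r ≤ 1) (ha : a * r ≤ p)
    (hPr : W.length * α = P + -r)
    (h : Tiling v U W (orbitIn α (-p) (r - p)) (orbitIn α (r - p) r)) :
    Tiling v W (powAppend a W U) (orbitIn α (r - (p - a * r)) r)
      (orbitIn α (-(p - a * r)) (r - (p - a * r))) := by
  have hjr : ∀ j : ℕ, j ≤ a → (j : ℝ) * r ≤ a * r := fun j hj => by gcongr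
  convert h.coarsen (a := a) hU hW ?_ using 1
  · ext k
    constructor
    · rintro ⟨m, h1, h2⟩
      refine ⟨⟨m, ?_, h2⟩, fun j hj1 hja hmem => ?_⟩
      · have := hjr 0 (Nat.zero_le _)
        push_cast at this
        linarith
      · obtain ⟨n, h3, h4⟩ := (add_mul_mem_orbitIn_iff hPr k j).1 hmem
        have h5 := hjr j hja
        have h6 : 0 ≤ (j : ℝ) * r := by positivity
        have hmn : m = n := by
          refine int_eq_of_sub_lt (x := k * α - j * r) (lo := -p) (hi := r) (by linarith) ?_ ?_ ?_ ?_
          all_goals linarith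
        subst hmn
        linarith
    · rintro ⟨⟨m, h1, h2⟩, hA⟩
      refine ⟨m, ?_, h2⟩
      by_contra! hlt
      have hc : (1 : ℕ) ≤ (k * α - m + p) / r := by
        rw [le_div_iff₀ hr]; push_cast; linarith
      have hc' : (k * α - m + p) / r < (a + 1 : ℕ) := by
        rw [div_lt_iff₀ hr]; push_cast; linarith
      have h0 : 0 ≤ (k * α - m + p) / r := le_trans (by positivity) hc
      have h3 : ⌊(k * α - m + p) / r⌋₊ < a + 1 := (Nat.floor_lt h0).2 hc'
      refine hA ⌊(k * α - m + p) / r⌋₊ (Nat.le_floor hc) (by omega)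
        ((add_mul_mem_orbitIn_iff hPr k _).2 ⟨m, ?_, ?_⟩)
      · have := Nat.floor_le h0
        rw [le_div_iff₀ hr] at this
        linarith
      · have := Nat.lt_floor_add_one ((k * α - m + p) / r)
        rw [div_lt_iff₀ hr] at this
        linarith
  · ext k
    rw [Set.mem_ofPred_eq, add_mul_mem_orbitIn_iff hPr]
    ring_nf
  · intro k hk j hj1 hja
    rw [sub_mul_mem_orbitIn_iff hPr]
    have h5 := hjr j hja
    have h6 : (1 : ℝ) * r ≤ j * r := by gcongr; exact_mod_cast hj1
    exact orbitIn_mono (by linarith) (by linarith) hk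

end Tiling

/-- The exponent in `s_{n+1} = s_n ^ e s_{n-1}`, with index shifted by one. -/
def swExp (α : ℝ) : ℕ → ℕ
  | 0 => pq α 0 - 1
  | n + 1 => pq α (n + 1)

theorem sw_add_two (α : ℝ) (n : ℕ) :
    sw α (n + 2) = powAppend (swExp α n) (sw α (n + 1)) (sw α n) := by
  cases n <;> simp [sw, swExp, powAppend]

theorem sw_length_pos (α : ℝ) (n : ℕ) : 0 < (sw α n).length := by
  induction n using Nat.twoStepInduction with
  | zero => simp [sw]
  | one => simp [sw]
  | more n ih _ => rw [sw_add_two, powAppend_length]; omega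

theorem sw_ne_sw_succ (α : ℝ) (n : ℕ) : sw α n ≠ sw α (n + 1) := by
  induction n with
  | zero => simp [sw]
  | succ n ih =>
    intro h
    have hlen := congrArg List.length h
    rw [sw_add_two, powAppend_length] at hlen
    have h0 := sw_length_pos α n
    have : swExp α n = 0 := by
      by_contra hne
      have : 1 * (sw α (n + 1)).length ≤ swExp α n * (sw α (n + 1)).length :=
        Nat.mul_le_mul_right _ (by omega)
      omega
    rw [sw_add_two, this] at h
    exact ih (by simpa [powAppend] using h.symm)

theorem sw_succ_length {α : ℝ} (h0 : 0 < α) (h1 : α < 1) (n : ℕ) :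
    (sw α (n + 1)).length = qd α (n + 1) := by
  have hpq : 1 ≤ pq α 0 := by
    refine Nat.le_floor ?_
    simpa using (one_lt_inv₀ h0).2 h1 |>.le
  induction n using Nat.twoStepInduction with
  | zero => simp [sw, qd]
  | one => simp [sw, qd]; omega
  | more n ih ih' =>
    rw [sw_add_two, powAppend_length, ih, ih']
    simp [qd, swExp]

theorem tiling_v0_zero {α : ℝ} (h0 : 0 < α) (h1 : α < 1) :
    Tiling (v0 α) (sw α 0) (sw α 1) (orbitIn α (1 - α - α) (1 - α))
      (orbitIn α (-α) (1 - α - α)) := by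
  have hfract : ∀ (k m : ℤ), -α ≤ k * α - m → k * α - m < 1 - α →
      Int.fract (((k + 1 : ℤ) : ℝ) * α) = k * α - m + α := by
    intro k m h2 h3
    rw [Int.fract_eq_iff]
    exact ⟨by linarith, by linarith, m, by push_cast; ring⟩
  have hA : ∀ k ∈ orbitIn α (1 - α - α) (1 - α), v0 α (k + 1) = true := by
    rintro k ⟨m, h2, h3⟩
    rw [v0, decide_eq_true_iff, hfract k m (by linarith) (by linarith)]
    linarith
  have hB : ∀ k ∈ orbitIn α (-α) (1 - α - α), v0 α (k + 1) = false := by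
    rintro k ⟨m, h2, h3⟩
    rw [v0, decide_eq_false_iff_not, hfract k m (by linarith) (by linarith)]
    linarith
  refine ⟨?_, ?_, ?_, ?_, ?_, ?_⟩
  · intro k hk
    simp [wordAt_eq_map, sw, hA k hk]
  · intro k hk
    simp [wordAt_eq_map, sw, hB k hk]
  · intro x
    have h2 := Int.floor_le ((x + 1) * α)
    have h3 := Int.lt_floor_add_one ((x + 1) * α)
    by_cases h : 1 - α - α ≤ x * α - ⌊(x + 1) * α⌋
    · exact .inl ⟨x, ⟨_, h, by linarith⟩, le_rfl, by simp [sw]⟩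
    · exact .inr ⟨x, ⟨_, by linarith, not_le.1 h⟩, le_rfl, by simp [sw]⟩
  · intro k _ l _ hkl
    simpa [sw] using hkl
  · intro k _ l _ hkl
    simpa [sw] using hkl
  · intro k hk l hl
    have hne : k ≠ l := by
      rintro rfl
      simpa [hA k hk] using hB k hl
    simp only [sw, List.length_singleton]
    omega

theorem exists_orbitIn_tiling {α : ℝ} (hirr : Irrational α) (h0 : 0 < α) (h1 : α < 1) (n : ℕ) :
    ∃ p r : ℝ, 0 < p ∧ 0 < r ∧ p + r ≤ 1 ∧ Irrational (p / r) ∧ ⌊p / r⌋₊ = swExp α n ∧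
      Int.fract (p / r) = gaussMap^[n + 1] α ∧ ∃ P Q : ℤ,
        ((sw α (n + 1)).length * α = P + r ∧ (sw α n).length * α = Q - p ∧
          Tiling (v0 α) (sw α n) (sw α (n + 1)) (orbitIn α (p - r) p) (orbitIn α (-r) (p - r))) ∨
        ((sw α (n + 1)).length * α = P + -r ∧ (sw α n).length * α = Q + p ∧
          Tiling (v0 α) (sw α n) (sw α (n + 1)) (orbitIn α (-p) (r - p))
            (orbitIn α (r - p) r)) := by
  induction n with
  | zero =>
    have hdiv : (1 - α) / α = α⁻¹ - 1 := by field_simp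
    refine ⟨1 - α, α, by linarith, h0, by linarith, ?_, ?_, ?_, 0, 1, .inl ⟨?_, ?_, ?_⟩⟩
    · rw [hdiv]
      simpa using hirr.inv.sub_intCast 1
    · rw [hdiv]
      simp [swExp, pq]
    · rw [hdiv]
      simp [gaussMap]
    · simp [sw]
    · simp [sw]
    · exact tiling_v0_zero h0 h1
  | succ n ih =>
    obtain ⟨p, r, hp, hr, hpr, hir, hfl, hfr, P, Q, hor⟩ := ih
    set a := swExp α n with ha
    have hflZ : (⌊p / r⌋ : ℝ) = a := by
      rw [← hfl, natCast_floor_eq_intCast_floor (by positivity)]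
    have hfr' : Int.fract (p / r) = (p - a * r) / r := by
      rw [Int.fract, hflZ]; field_simp
    have hpos : 0 < p - a * r := by
      have h2 : 0 < Int.fract (p / r) := Int.fract_pos.2 fun h => hir ⟨⌊p / r⌋, by
        rw [Rat.cast_intCast]; exact h.symm⟩
      rw [hfr'] at h2
      exact (div_pos_iff_of_pos_right hr).1 h2
    have hinv : r / (p - a * r) = (gaussMap^[n + 1] α)⁻¹ := by
      rw [← hfr, hfr', inv_div]
    have har : 0 ≤ a * r := by positivity
    refine ⟨r, p - a * r, hr, hpos, by linarith, ?_, ?_, ?_, Q + a * P, P, ?_⟩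
    · rw [hinv, ← hfr]
      exact (hir.sub_intCast _).inv
    · rw [hinv]
      rfl
    · rw [hinv, Function.iterate_succ_apply' gaussMap (n + 1)]
      rfl
    · have hlen : ((sw α (n + 2)).length : ℝ) = a * (sw α (n + 1)).length + (sw α n).length := by
        rw [sw_add_two, powAppend_length]; push_cast; ring
      have hU := sw_length_pos α n
      have hW := sw_length_pos α (n + 1)
      rcases hor with ⟨hP, hQ, h⟩ | ⟨hP, hQ, h⟩
      · refine .inr ⟨?_, hP, ?_⟩
        · rw [hlen]
          push_cast
          linear_combination (a : ℝ) * hP + hQ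
        · rw [sw_add_two]
          exact h.coarsen_orbitIn_right hU hW hr hpr (by linarith) hP
      · refine .inl ⟨?_, by rw [hP]; ring, ?_⟩
        · rw [hlen]
          push_cast
          linear_combination (a : ℝ) * hP + hQ
        · rw [sw_add_two]
          exact h.coarsen_orbitIn_left hU hW hr hpr (by linarith) hP

theorem exists_tiling_v0 {α : ℝ} (hirr : Irrational α) (h0 : 0 < α) (h1 : α < 1) (n : ℕ) :
    ∃ A B : Set ℤ, Tiling (v0 α) (sw α n) (sw α (n + 1)) A B := by
  obtain ⟨p, r, -, -, -, -, -, -, P, Q, ⟨-, -, h⟩ | ⟨-, -, h⟩⟩ :=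
    exists_orbitIn_tiling hirr h0 h1 n
  exacts [⟨_, _, h⟩, ⟨_, _, h⟩]

theorem tiling_sw_unique (α : ℝ) (v : ℤ → Bool) (n : ℕ) (A B A' B' : Set ℤ)
    (h : Tiling v (sw α n) (sw α (n + 1)) A B) (h' : Tiling v (sw α n) (sw α (n + 1)) A' B') :
    A = A' ∧ B = B' := by
  induction n generalizing A B A' B' with
  | zero =>
    have key : ∀ A B : Set ℤ, Tiling v (sw α 0) (sw α 1) A B →
        A = {k | v (k + 1) = true} ∧ B = {k | v (k + 1) = false} := by
      intro A B h
      have hA : ∀ k ∈ A, v (k + 1) = true := fun k hk => by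
        simpa [wordAt_eq_map, sw] using h.word_left k hk
      have hB : ∀ k ∈ B, v (k + 1) = false := fun k hk => by
        simpa [wordAt_eq_map, sw] using h.word_right k hk
      have hAB : ∀ k, k ∈ A ∨ k ∈ B := by
        intro k
        have := h.cover k
        simp only [sw, List.length_singleton, Nat.cast_one] at this
        rcases this with ⟨l, hl, h1, h2⟩ | ⟨l, hl, h1, h2⟩
        · exact .inl (by rwa [show k = l by omega])
        · exact .inr (by rwa [show k = l by omega])
      constructor
      · ext k
        refine ⟨hA k, fun hk => (hAB k).resolve_right fun hk' => ?_⟩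
        simp [hB k hk'] at hk
      · ext k
        refine ⟨hB k, fun hk => (hAB k).resolve_left fun hk' => ?_⟩
        simp [hA k hk'] at hk
    obtain ⟨rfl, rfl⟩ := key A B h
    obtain ⟨rfl, rfl⟩ := key A' B' h'
    exact ⟨rfl, rfl⟩
  | succ n ih =>
    rw [sw_add_two] at h h'
    exact Tiling.unique_powAppend (sw_length_pos α n) (sw_length_pos α (n + 1)) ih h h'

theorem isClosed_setOf_wordAt_eq (m : ℤ) (n : ℕ) (w : List Bool) :
    IsClosed {v : ℤ → Bool | wordAt v m n = w} := by
  have hc : Continuous fun (v : ℤ → Bool) (i : Fin n) => v (m + (i : ℕ)) := by fun_prop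
  have h : {v : ℤ → Bool | wordAt v m n = w} =
      (fun (v : ℤ → Bool) (i : Fin n) => v (m + (i : ℕ))) ⁻¹' {f | List.ofFn f = w} := by
    ext v
    simp [wordAt_eq_map, List.ofFn_eq_map, ← List.map_coe_finRange_eq_range, Function.comp_def]
  rw [h]
  exact (isClosed_discrete _).preimage hc

theorem isClosed_setOf_exists_tiling (U W : List Bool) :
    IsClosed {v : ℤ → Bool | ∃ A B : Set ℤ, Tiling v U W A B} := by
  have hmem : ∀ k : ℤ,
      IsClopen {x : (ℤ → Bool × Bool) × (ℤ → Bool) | (x.1 k).1 = true} := fun k =>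
    (isClopen_discrete {true}).preimage (f := fun x : (ℤ → Bool × Bool) × (ℤ → Bool) => (x.1 k).1)
      (by fun_prop)
  have hmem' : ∀ k : ℤ,
      IsClopen {x : (ℤ → Bool × Bool) × (ℤ → Bool) | (x.1 k).2 = true} := fun k =>
    (isClopen_discrete {true}).preimage (f := fun x : (ℤ → Bool × Bool) × (ℤ → Bool) => (x.1 k).2)
      (by fun_prop)
  have hword : ∀ (k : ℤ) (w : List Bool),
      IsClosed {x : (ℤ → Bool × Bool) × (ℤ → Bool) | wordAt x.2 (k + 1) w.length = w} :=
    fun k w => (isClosed_setOf_wordAt_eq _ _ _).preimage continuous_snd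
  have hall : ∀ {P : ℤ → (ℤ → Bool × Bool) × (ℤ → Bool) → Prop},
      (∀ k, IsClosed {x | P k x}) → IsClosed {x | ∀ k, P k x} := fun h => by
    simpa only [Set.ofPred_forall] using isClosed_iInter h
  have hcl : IsClosed {x : (ℤ → Bool × Bool) × (ℤ → Bool) |
      Tiling x.2 U W {k | (x.1 k).1 = true} {k | (x.1 k).2 = true}} := by
    have hcover : ∀ (x : (ℤ → Bool × Bool) × (ℤ → Bool)) (y : ℤ),
        ((∃ k ∈ {k | (x.1 k).1 = true}, k ≤ y ∧ y < k + U.length) ∨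
          (∃ k ∈ {k | (x.1 k).2 = true}, k ≤ y ∧ y < k + W.length)) ↔
        ((∃ k ∈ Set.Ioc (y - U.length) y, (x.1 k).1 = true) ∨
          (∃ k ∈ Set.Ioc (y - W.length) y, (x.1 k).2 = true)) := by
      intro x y
      simp only [Set.mem_ofPred_eq, Set.mem_Ioc, sub_lt_iff_lt_add]
      refine or_congr (exists_congr fun k => ?_) (exists_congr fun k => ?_) <;> tauto
    have htil : ∀ x : (ℤ → Bool × Bool) × (ℤ → Bool),
        Tiling x.2 U W {k | (x.1 k).1 = true} {k | (x.1 k).2 = true} ↔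
        (∀ k, (x.1 k).1 = true → wordAt x.2 (k + 1) U.length = U) ∧
        (∀ k, (x.1 k).2 = true → wordAt x.2 (k + 1) W.length = W) ∧
        (∀ y : ℤ, (∃ k ∈ Set.Ioc (y - U.length) y, (x.1 k).1 = true) ∨
          (∃ k ∈ Set.Ioc (y - W.length) y, (x.1 k).2 = true)) ∧
        (∀ k, (x.1 k).1 = true → ∀ l, (x.1 l).1 = true → k < l → k + U.length ≤ l) ∧
        (∀ k, (x.1 k).2 = true → ∀ l, (x.1 l).2 = true → k < l → k + W.length ≤ l) ∧
        (∀ k, (x.1 k).1 = true → ∀ l, (x.1 l).2 = true →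
          k + U.length ≤ l ∨ l + W.length ≤ k) :=
      fun x => ⟨fun h => ⟨h.1, h.2, fun y => (hcover x y).1 (h.3 y), h.4, h.5, h.6⟩,
        fun h => ⟨h.1, h.2.1, fun y => (hcover x y).2 (h.2.2.1 y), h.2.2.2.1, h.2.2.2.2.1,
          h.2.2.2.2.2⟩⟩
    simp only [htil]
    refine .and ?_ (.and ?_ (.and ?_ (.and ?_ (.and ?_ ?_))))
    · exact hall fun k => isClosed_imp (hmem k).isOpen (hword k U)
    · exact hall fun k => isClosed_imp (hmem' k).isOpen (hword k W)
    · refine hall fun y => ?_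
      have h := ((Set.finite_Ioc (y - (U.length : ℤ)) y).isClosed_biUnion
        fun k _ => (hmem k).isClosed).union
        ((Set.finite_Ioc (y - (W.length : ℤ)) y).isClosed_biUnion fun k _ => (hmem' k).isClosed)
      convert h using 1
      ext x
      simp
    · exact hall fun k => isClosed_imp (hmem k).isOpen <| hall fun l =>
        isClosed_imp (hmem l).isOpen isClosed_const
    · exact hall fun k => isClosed_imp (hmem' k).isOpen <| hall fun l =>
        isClosed_imp (hmem' l).isOpen isClosed_const
    · exact hall fun k => isClosed_imp (hmem k).isOpen <| hall fun l =>
        isClosed_imp (hmem' l).isOpen isClosed_const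
  have hproj := isClosedMap_snd_of_compactSpace _ hcl
  convert hproj using 1
  ext v
  constructor
  · rintro ⟨A, B, h⟩
    refine ⟨(fun k => (decide (k ∈ A), decide (k ∈ B)), v), ?_, rfl⟩
    simpa using h
  · rintro ⟨x, hx, rfl⟩
    exact ⟨_, _, hx⟩

theorem exists_tiling_of_mem_hull {α : ℝ} (hirr : Irrational α) (h0 : 0 < α) (h1 : α < 1)
    {v : ℤ → Bool} (hv : v ∈ hull α) (n : ℕ) :
    ∃ A B : Set ℤ, Tiling v (sw α n) (sw α (n + 1)) A B := by
  refine closure_minimal ?_ (isClosed_setOf_exists_tiling (sw α n) (sw α (n + 1))) hv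
  rintro _ ⟨m, rfl⟩
  obtain ⟨A, B, h⟩ := exists_tiling_v0 hirr h0 h1 n
  exact ⟨_, _, h.translate m⟩

theorem StrictMono.add_le_int {c : ℤ → ℤ} (hc : StrictMono c) {i j : ℤ} (hij : i ≤ j) :
    c i + (j - i) ≤ c j := by
  have hmono : Monotone fun i => c i - i := monotone_int_of_le_succ fun i => by
    have := hc (lt_add_one i)
    change c i - i ≤ c (i + 1) - (i + 1)
    omega
  have := hmono hij
  simp only at this
  omega

theorem StrictMono.exists_le_lt_int {c : ℤ → ℤ} (hc : StrictMono c) (x : ℤ) :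
    ∃ i, c i ≤ x ∧ x < c (i + 1) := by
  obtain ⟨i, hi, hmax⟩ := Int.exists_greatest_of_bdd (P := fun i => c i ≤ x)
    ⟨max 0 (x - c 0), fun i hi => by
      by_contra hlt
      have := hc.add_le_int (i := 0) (j := i) (by omega)
      omega⟩
    ⟨min 0 (x - c 0), by
      have := hc.add_le_int (i := min 0 (x - c 0)) (j := 0) (by omega)
      omega⟩
  refine ⟨i, hi, ?_⟩
  by_contra! h
  have := hmax _ h
  omega

theorem StrictMono.eq_of_range_eq_int {c d : ℤ → ℤ} (hc : StrictMono c) (hd : StrictMono d)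
    (hr : Set.range c = Set.range d) (hc0 : c 0 ≤ 0) (hc1 : 0 < c 1) (hd0 : d 0 ≤ 0)
    (hd1 : 0 < d 1) : c = d := by
  have key : ∀ {c d : ℤ → ℤ}, StrictMono c → StrictMono d → Set.range c = Set.range d →
      c 0 ≤ 0 → 0 < d 1 →
      c 0 ≤ d 0 ∧ ∀ i, c i = d i → d (i + 1) ≤ c (i + 1) ∧ c (i - 1) ≤ d (i - 1) := by
    intro c d hc hd hr hc0 hd1
    have hmem : ∀ i, ∃ j, d j = c i := fun i => by
      rw [← Set.mem_range, ← hr]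
      exact Set.mem_range_self i
    refine ⟨?_, fun i hi => ⟨?_, ?_⟩⟩
    · obtain ⟨j, hj⟩ := hmem 0
      have : j < 1 := hd.lt_iff_lt.1 (by omega)
      exact hj ▸ hd.monotone (by omega)
    · obtain ⟨j, hj⟩ := hmem (i + 1)
      have : i < j := hd.lt_iff_lt.1 (by rw [hj, ← hi]; exact hc (by omega))
      exact hj ▸ hd.monotone (by omega)
    · obtain ⟨j, hj⟩ := hmem (i - 1)
      have : j < i := hd.lt_iff_lt.1 (by rw [hj, ← hi]; exact hc (by omega))
      exact hj ▸ hd.monotone (by omega)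
  obtain ⟨h0, h⟩ := key hc hd hr hc0 hd1
  obtain ⟨h0', h'⟩ := key hd hc hr.symm hd0 hc1
  funext i
  induction i using Int.induction_on with
  | zero => exact le_antisymm h0 h0'
  | succ i ih => exact le_antisymm (h' _ ih.symm).1 (h _ ih).1
  | pred i ih => exact le_antisymm (h _ ih).2 (h' _ ih.symm).2

theorem IsPartition.tiling {α : ℝ} (h0 : 0 < α) (h1 : α < 1) {v : ℤ → Bool} {n : ℕ} {c : ℤ → ℤ}
    (h : IsPartition α v (n + 1) c) :
    Tiling v (sw α (n + 1)) (sw α (n + 2)) {k | ∃ i, c i = k ∧ BlockIs α v c i (n + 1)}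
      {k | ∃ i, c i = k ∧ BlockIs α v c i (n + 2)} := by
  obtain ⟨hc, -, -, -, -, hblock⟩ := h
  have hlt : ∀ {i j}, c i < c j → c (i + 1) ≤ c j := fun hij => by
    have := hc.lt_iff_lt.1 hij
    exact hc.monotone (by omega)
  have hU := sw_succ_length h0 h1 n
  have hW : (sw α (n + 2)).length = qd α (n + 2) := sw_succ_length h0 h1 (n + 1)
  refine ⟨?_, ?_, ?_, ?_, ?_, ?_⟩
  · rintro _ ⟨i, rfl, -, hi⟩
    rwa [hU]
  · rintro _ ⟨i, rfl, -, hi⟩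
    rwa [hW]
  · intro x
    obtain ⟨i, hi, hi'⟩ := hc.exists_le_lt_int x
    rcases hblock i with hb | hb
    · exact .inl ⟨c i, ⟨i, rfl, hb⟩, hi, by rw [hU]; have := hb.1; omega⟩
    · exact .inr ⟨c i, ⟨i, rfl, hb⟩, hi, by
        have : c (i + 1) - c i = (qd α (n + 2) : ℤ) := hb.1
        omega⟩
  · rintro _ ⟨i, rfl, hi, -⟩ _ ⟨j, rfl, -⟩ hij
    have := hlt hij
    omega
  · rintro _ ⟨i, rfl, hi, -⟩ _ ⟨j, rfl, -⟩ hij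
    have := hlt hij
    omega
  · rintro _ ⟨i, rfl, hi⟩ _ ⟨j, rfl, hj⟩
    rcases lt_trichotomy (c i) (c j) with hij | hij | hij
    · have := hlt hij
      have := hi.1
      omega
    · obtain rfl := hc.injective hij
      have hq : qd α (n + 1) = qd α (n + 2) := by
        have := hi.1
        have := hj.1
        omega
      exact absurd (hi.2.symm.trans (hq ▸ hj.2)) (sw_ne_sw_succ α (n + 1))
    · have := hlt hij
      have := hj.1
      omega

theorem IsPartition.range_eq {α : ℝ} {v : ℤ → Bool} {n : ℕ} {c : ℤ → ℤ}
    (h : IsPartition α v n c) :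
    Set.range c = {k | ∃ i, c i = k ∧ BlockIs α v c i n} ∪
      {k | ∃ i, c i = k ∧ BlockIs α v c i (n + 1)} := by
  obtain ⟨-, -, -, -, -, hblock⟩ := h
  ext k
  constructor
  · rintro ⟨i, rfl⟩
    exact (hblock i).imp (fun hb => ⟨i, rfl, hb⟩) (fun hb => ⟨i, rfl, hb⟩)
  · rintro (⟨i, hi, -⟩ | ⟨i, hi, -⟩) <;> exact ⟨i, hi⟩

namespace Tiling

variable {v : ℤ → Bool} {U W : List Bool} {A B : Set ℤ}

theorem symm (h : Tiling v U W A B) : Tiling v W U B A where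
  word_left := h.word_right
  word_right := h.word_left
  cover x := (h.cover x).symm
  sep_left := h.sep_right
  sep_right := h.sep_left
  sep k hk l hl := (h.sep l hl k hk).symm

theorem add_length_mem (h : Tiling v U W A B) (hU : 0 < U.length) (hW : 0 < W.length) {k : ℤ}
    (hk : k ∈ A) : k + U.length ∈ A ∪ B := by
  have hkC : k ∈ A ∪ B := .inl hk
  rcases h.cover (k + U.length) with ⟨l, hl, h1, h2⟩ | ⟨l, hl, h1, h2⟩
  · have h3 := h.left_add_le hk (.inl hl)
    have h4 := h.left_add_le hl hkC
    left
    rwa [show k + U.length = l by omega]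
  · have h3 := h.left_add_le hk (.inr hl)
    have h4 := h.right_add_le hl hkC
    have h5 := h.ne_of_mem hU hW hk hl
    right
    rwa [show k + U.length = l by omega]

theorem exists_strictMono (h : Tiling v U W A B) (hU : 0 < U.length) (hW : 0 < W.length) :
    ∃ c : ℤ → ℤ, StrictMono c ∧ c 0 ≤ 0 ∧ 0 < c 1 ∧ ∀ i,
      (c i ∈ A ∧ c (i + 1) = c i + U.length) ∨ (c i ∈ B ∧ c (i + 1) = c i + W.length) := by
  have hnext : ∀ k ∈ A ∪ B, ∃ l ∈ A ∪ B, k < l := by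
    rintro k (hk | hk)
    · exact ⟨_, h.add_length_mem hU hW hk, by omega⟩
    · exact ⟨_, (h.symm.add_length_mem hW hU hk).symm, by omega⟩
  have hle : ∀ x, ∃ l ∈ A ∪ B, l ≤ x := fun x => by
    rcases h.cover x with ⟨l, hl, hlx, -⟩ | ⟨l, hl, hlx, -⟩
    exacts [⟨l, .inl hl, hlx⟩, ⟨l, .inr hl, hlx⟩]
  let C := {k : ℤ // k ∈ A ∪ B}
  have : NoMaxOrder C := ⟨fun k => by
    obtain ⟨l, hl, hkl⟩ := hnext k k.2
    exact ⟨⟨l, hl⟩, hkl⟩⟩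
  have : NoMinOrder C := ⟨fun k => by
    obtain ⟨l, hl, hkl⟩ := hle (k.1 - 1)
    exact ⟨⟨l, hl⟩, show l < k.1 by omega⟩⟩
  have : Nonempty C := by
    obtain ⟨l, hl, -⟩ := hle 0
    exact ⟨⟨l, hl⟩⟩
  let _ : SuccOrder C := LinearLocallyFiniteOrder.succOrder C
  let _ : PredOrder C := LinearLocallyFiniteOrder.predOrder C
  let e : ℤ ≃o C := orderIsoIntOfLinearSuccPredArch.symm
  have he : StrictMono fun i => (e i).1 := fun i j hij => e.strictMono hij
  obtain ⟨i₀, h1, h2⟩ := he.exists_le_lt_int 0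
  have hsucc : ∀ (i : ℤ) (L : ℕ), 0 < L → (e i).1 + (L : ℤ) ∈ A ∪ B →
      (∀ l ∈ A ∪ B, (e i).1 < l → (e i).1 + L ≤ l) → (e (i + 1)).1 = (e i).1 + L := by
    intro i L hL hmem hmin
    obtain ⟨j, hj⟩ := e.surjective ⟨_, hmem⟩
    have hj' : (e j).1 = (e i).1 + L := by rw [hj]
    have hij : i < j := he.lt_iff_lt.1 (show (e i).1 < (e j).1 by omega)
    have h3 : (e (i + 1)).1 ≤ (e j).1 := he.monotone hij
    have h4 := hmin _ (e (i + 1)).2 (he (lt_add_one i))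
    omega
  refine ⟨fun i => (e (i₀ + i)).1, fun i j hij => he (by omega), by simpa using h1, h2,
    fun i => ?_⟩
  simp only [← add_assoc]
  rcases (e (i₀ + i)).2 with hk | hk
  · exact .inl ⟨hk, hsucc _ _ hU (h.add_length_mem hU hW hk) fun l hl => h.left_add_le hk hl⟩
  · exact .inr ⟨hk, hsucc _ _ hW (h.symm.add_length_mem hW hU hk).symm
      fun l hl => h.right_add_le hk hl⟩

theorem exists_isPartition {α : ℝ} (h0 : 0 < α) (h1 : α < 1) {n : ℕ}
    (h : Tiling v (sw α (n + 1)) (sw α (n + 2)) A B) : ∃ c, IsPartition α v (n + 1) c := by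
  obtain ⟨c, hc, hc0, hc1, hblock⟩ :=
    h.exists_strictMono (sw_length_pos α (n + 1)) (sw_length_pos α (n + 2))
  have hU : (sw α (n + 1)).length = qd α (n + 1) := sw_succ_length h0 h1 n
  have hW : (sw α (n + 2)).length = qd α (n + 2) := sw_succ_length h0 h1 (n + 1)
  refine ⟨c, hc, hc0, hc1, ?_, ?_, fun i => ?_⟩
  · refine Filter.tendsto_atTop_mono' _ ?_ (Filter.tendsto_atTop_add_const_left _ (c 0)
      Filter.tendsto_id)
    filter_upwards [Filter.eventually_ge_atTop 0] with i hi
    simpa using hc.add_le_int hi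
  · refine Filter.tendsto_atBot_mono' _ ?_ (Filter.tendsto_atBot_add_const_left _ (c 0)
      Filter.tendsto_id)
    filter_upwards [Filter.eventually_le_atBot 0] with i hi
    have := hc.add_le_int hi
    simp only [id]
    omega
  · rcases hblock i with ⟨hi, hi'⟩ | ⟨hi, hi'⟩
    · exact .inl ⟨by omega, hU ▸ h.word_left _ hi⟩
    · exact .inr ⟨show c (i + 1) - c i = (qd α (n + 2) : ℤ) by omega, hW ▸ h.word_right _ hi⟩

end Tiling

/-- Lemma 2.1. Every `v ∈ Ω` has, for every `n ≥ 1`, a unique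
`(n-1, n)`-partition. -/
theorem partition_exists_unique (α : ℝ) (hirr : Irrational α) (h0 : 0 < α) (h1 : α < 1) :
    ∀ v ∈ hull α, ∀ n : ℕ, 1 ≤ n → ∃! c : ℤ → ℤ, IsPartition α v n c := by
  intro v hv n hn
  obtain ⟨n, rfl⟩ : ∃ m, n = m + 1 := ⟨n - 1, by omega⟩
  obtain ⟨A, B, h⟩ := exists_tiling_of_mem_hull hirr h0 h1 hv (n + 1)
  obtain ⟨c, hc⟩ := h.exists_isPartition h0 h1
  refine ⟨c, hc, fun d hd => ?_⟩
  obtain ⟨hA, hB⟩ := tiling_sw_unique α v (n + 1) _ _ _ _ (hd.tiling h0 h1) (hc.tiling h0 h1)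
  refine hd.1.eq_of_range_eq_int hc.1 ?_ hd.2.1 hd.2.2.1 hc.2.1 hc.2.2.1
  rw [hd.range_eq, hc.range_eq, hA, hB]

end
end

section
/- With t₀ = B, t₁ = A and t_{n+1} = tₙ · t̄_{n−1} for n ≥ 1, one has t_{n+1} = σⁿ(A) for every n ≥ 0. -/
/-- The four-letter alphabet `{A, B, A′, B′}`. -/
inductive Letter : Type
  | A | B | A' | B'
  deriving DecidableEq

open Letter

/-- The substitution `σ : A ↦ AB′, A′ ↦ BA′, B ↦ A, B′ ↦ A′`. -/
def sigmaL : Letter → List Letter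
  | A => [A, B']
  | A' => [B, A']
  | B => [A]
  | B' => [A']

/-- `σ` extended to words as a monoid homomorphism. -/
def sigmaW (l : List Letter) : List Letter := l.flatMap sigmaL

/-- the exchange `A ↔ A′`, `B ↔ B′`. -/
def swapL : Letter → Letter
  | A => A' | A' => A | B => B' | B' => B

/-- `s̄`: the reversal of `s` with `A ↔ A′` and `B ↔ B′` exchanged. -/
def barW (l : List Letter) : List Letter := l.reverse.map swapL

/-- `t₀ = B`, `t₁ = A`, `t_{n+1} = tₙ · t̄_{n-1}`. -/
def tW : ℕ → List Letter
  | 0 => [B]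
  | 1 => [A]
  | (n+2) => tW (n+1) ++ barW (tW n)

theorem sigmaW_append (s t : List Letter) : sigmaW (s ++ t) = sigmaW s ++ sigmaW t :=
  List.flatMap_append

theorem barW_append (s t : List Letter) : barW (s ++ t) = barW t ++ barW s := by
  simp [barW]

/-- The substitution commutes with the bar involution. -/
theorem sigmaW_barW (s : List Letter) : sigmaW (barW s) = barW (sigmaW s) := by
  induction s with
  | nil => rfl
  | cons a s ih =>
    have singleton : sigmaW (barW [a]) = barW (sigmaW [a]) := by cases a <;> rfl
    rw [← List.singleton_append, barW_append, sigmaW_append, sigmaW_append, barW_append, ih,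
      singleton]

theorem tW_succ_eq_sigmaW : ∀ n : ℕ, tW (n + 1) = sigmaW (tW n)
  | 0 => rfl
  | 1 => rfl
  | n + 2 => calc
    tW (n + 3) = tW (n + 2) ++ barW (tW (n + 1)) := rfl
    _ = sigmaW (tW (n + 1)) ++ sigmaW (barW (tW n)) := by
      rw [tW_succ_eq_sigmaW (n + 1), tW_succ_eq_sigmaW n, sigmaW_barW]
    _ = sigmaW (tW (n + 2)) := (sigmaW_append _ _).symm

/-- Proposition 4.1 (2) / Lemma step `tₙ = σⁿ(A)`:
`t_{n+1} = σⁿ(A)` for every `n ≥ 0`. -/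
theorem tW_eq_sigma_iterate : ∀ n : ℕ, tW (n + 1) = sigmaW^[n] [Letter.A] := by
  intro n
  induction n with
  | zero => rfl
  | succ n ih => rw [tW_succ_eq_sigmaW, ih, Function.iterate_succ_apply']
end

section
/- For every n ≥ 0, the word obtained from σⁿ(A) by replacing each of A, A′ by 1 and each of B, B′ by 0 equals (h(0), h(1), …, h(L−1)), where L is the length of σⁿ(A). In particular, the projection of the fixed point of σ starting with A is the sequence h = h_{AA}. -/
open scoped Classical

open Letter

/-- The projection identifying `A, A′` with `1` (`true`) and `B, B′` with `0` (`false`). -/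
def projL : Letter → Bool
  | A => true | A' => true | B => false | B' => false

/-- The sequence `h = h_{AA}`: `h(m) = 1` iff the fractional part of `mα + 1/2` lies in
`[1-α, 1)`. -/
noncomputable def hseq (α : ℝ) (m : ℕ) : Bool :=
  decide (1 - α ≤ Int.fract ((m : ℝ) * α + 1 / 2))

/-- The letter whose coding window contains `x ∈ [0, 1)`: the windows of `B′, B, A, A′`, in this
order from left to right, halve the two windows of the Fibonacci rotation. The orbit of `1/2`
under the rotation by `α` is coded by `codedLetter`. -/
noncomputable def windowLetter (α x : ℝ) : Letter :=
  if x < (1 - α) / 2 then B'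
  else if x < 1 - α then B
  else if x < 1 - α / 2 then A
  else A'

noncomputable def codedLetter (α : ℝ) (m : ℕ) : Letter :=
  windowLetter α (Int.fract ((m : ℝ) * α + 1 / 2))

/-- The length of the image under `σ` of the first `m` coded letters. -/
noncomputable def blockStart (α : ℝ) (m : ℕ) : ℕ :=
  m + ⌊(m : ℝ) * α + 1 / 2⌋₊

/-- The properties of `α = (√5 - 1) / 2` used below. -/
structure IsInverseGolden (α : ℝ) : Prop where
  pos : 0 < α
  one_half_lt : 1 / 2 < α
  lt_one : α < 1
  sq : α * α = 1 - α
  irrational : Irrational α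

theorem isInverseGolden_of_eq {α : ℝ} (hα : α = (Real.sqrt 5 - 1) / 2) : IsInverseGolden α := by
  have h5 : Real.sqrt 5 * Real.sqrt 5 = 5 := Real.mul_self_sqrt (by norm_num)
  have h2 : 2 < Real.sqrt 5 := by
    rw [Real.lt_sqrt] <;> norm_num
  have h3 : Real.sqrt 5 < 3 := by
    rw [Real.sqrt_lt'] <;> norm_num
  have hirr : Irrational (Real.sqrt 5) := by
    simpa using Nat.Prime.irrational_sqrt (p := 5) (by norm_num)
  refine ⟨by linarith, by linarith, by linarith, by rw [hα]; linarith, ?_⟩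
  rintro ⟨q, hq⟩
  exact hirr ⟨2 * q + 1, by push_cast; linarith⟩

theorem Irrational.intCast_mul_ne_intCast {α : ℝ} (h : Irrational α) {a : ℤ} (ha : a ≠ 0)
    (b : ℤ) : (a : ℝ) * α ≠ b :=
  (h.intCast_mul ha).ne_int b

/-- The orbit of `1/2` avoids the endpoints of the coding windows. -/
theorem fract_ne_endpoints {α : ℝ} (h : IsInverseGolden α) (m : ℕ) :
    Int.fract ((m : ℝ) * α + 1 / 2) ≠ (1 - α) / 2 ∧
      Int.fract ((m : ℝ) * α + 1 / 2) ≠ 1 - α ∧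
      Int.fract ((m : ℝ) * α + 1 / 2) ≠ 1 - α / 2 := by
  have key := Int.self_sub_floor ((m : ℝ) * α + 1 / 2)
  set k := ⌊(m : ℝ) * α + 1 / 2⌋
  refine ⟨fun e => ?_, fun e => ?_, fun e => ?_⟩ <;> rw [e] at key
  · exact h.irrational.intCast_mul_ne_intCast (a := 2 * m + 1) (by omega) (2 * k)
      (by push_cast; linarith)
  · exact h.irrational.intCast_mul_ne_intCast (a := 2 * m + 2) (by omega) (2 * k + 1)
      (by push_cast; linarith)
  · exact h.irrational.intCast_mul_ne_intCast (a := 2 * m + 1) (by omega) (2 * k + 1)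
      (by push_cast; linarith)

theorem projL_codedLetter {α : ℝ} (h : IsInverseGolden α) (m : ℕ) :
    projL (codedLetter α m) = hseq α m := by
  have := h.lt_one
  unfold codedLetter windowLetter hseq
  split_ifs <;> simp only [projL] <;> symm <;>
    simp only [decide_eq_true_eq, decide_eq_false_iff_not] <;> linarith

theorem codedLetter_eq {α x : ℝ} {m : ℕ} {k : ℤ} (hx : (m : ℝ) * α + 1 / 2 = k + x)
    (h0 : 0 ≤ x) (h1 : x < 1) : codedLetter α m = windowLetter α x := by
  have : Int.fract ((m : ℝ) * α + 1 / 2) = x :=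
    Int.fract_eq_iff.2 ⟨h0, h1, k, by rw [hx]; ring⟩
  rw [codedLetter, this]

theorem sigmaL_codedLetter {α : ℝ} (h : IsInverseGolden α) (m : ℕ) :
    blockStart α m ≤ blockStart α (m + 1) ∧
    sigmaL (codedLetter α m) =
      (List.range' (blockStart α m) (blockStart α (m + 1) - blockStart α m)).map
        (codedLetter α) := by
  obtain ⟨n1, n2, n3⟩ := fract_ne_endpoints h m
  obtain ⟨hpos, hhalf, hlt, hsq, -⟩ := h
  have hy : 0 ≤ (m : ℝ) * α + 1 / 2 := by positivity
  set k := ⌊(m : ℝ) * α + 1 / 2⌋₊ with hk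
  set x := (m : ℝ) * α + 1 / 2 - k with hx
  have hx0 : 0 ≤ x := sub_nonneg.2 (Nat.floor_le hy)
  have hx1 : x < 1 := by linarith [Nat.lt_floor_add_one ((m : ℝ) * α + 1 / 2)]
  have hfr : Int.fract ((m : ℝ) * α + 1 / 2) = x :=
    Int.fract_eq_iff.2 ⟨hx0, hx1, k, by rw [hx]; push_cast; ring⟩
  rw [hfr] at n1 n2 n3
  have hstart : blockStart α m = m + k := rfl
  have hz : ((m + k : ℕ) : ℝ) * α + 1 / 2 = ((m : ℤ) : ℝ) + ((1 + α) / 2 - α * x) := by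
    rw [hx]; push_cast; linear_combination (m : ℝ) * hsq
  have hz' : ((m + k + 1 : ℕ) : ℝ) * α + 1 / 2 =
      ((m : ℤ) : ℝ) + ((1 + α) / 2 - α * x + α) := by
    push_cast at hz ⊢; linarith
  have hz'' : ((m + k + 1 : ℕ) : ℝ) * α + 1 / 2 =
      ((m + 1 : ℤ) : ℝ) + ((1 + α) / 2 - α * x + α - 1) := by
    push_cast at hz ⊢; linarith
  have hm0 : 0 ≤ α * x := by positivity
  have hm1 : α * x < α := by nlinarith
  have hcode := codedLetter_eq hz (by linarith) (by linarith)
  have hcurrent : codedLetter α m = windowLetter α x := by rw [codedLetter, hfr]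
  rcases lt_or_ge x (1 - α) with hB | hA
  · have hfl : ⌊((m + 1 : ℕ) : ℝ) * α + 1 / 2⌋₊ = k := by
      rw [Nat.floor_eq_iff (by positivity)]
      constructor <;> push_cast <;> linarith
    have hnext : blockStart α (m + 1) = m + k + 1 := by
      rw [blockStart, hfl]; omega
    have hlen : m + k + 1 - (m + k) = 1 := by omega
    rw [hstart, hnext, hlen, hcurrent]
    refine ⟨by omega, ?_⟩
    simp only [List.range'_succ, List.range'_zero, List.map_cons, List.map_nil, hcode]
    have : α * x < α * (1 - α) := by gcongr
    rcases lt_or_gt_of_ne n1 with hc | hc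
    · have : α * x < α * ((1 - α) / 2) := by gcongr
      rw [windowLetter, windowLetter, if_pos hc, if_neg (by linarith), if_neg (by linarith),
        if_neg (by linarith)]
      rfl
    · have : α * ((1 - α) / 2) < α * x := by gcongr
      rw [windowLetter, windowLetter, if_neg (by linarith), if_pos hB, if_neg (by linarith),
        if_neg (by linarith), if_pos (by linarith)]
      rfl
  · have hA' : 1 - α < x := lt_of_le_of_ne hA n2.symm
    have hfl : ⌊((m + 1 : ℕ) : ℝ) * α + 1 / 2⌋₊ = k + 1 := by
      rw [Nat.floor_eq_iff (by positivity)]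
      constructor <;> push_cast <;> linarith
    have hnext : blockStart α (m + 1) = m + k + 2 := by
      rw [blockStart, hfl]; omega
    have hlen : m + k + 2 - (m + k) = 2 := by omega
    rw [hstart, hnext, hlen, hcurrent]
    refine ⟨by omega, ?_⟩
    simp only [List.range'_succ, List.range'_zero, List.map_cons, List.map_nil, hcode]
    have : α * (1 - α) < α * x := by gcongr
    rcases lt_or_gt_of_ne n3 with hc | hc
    · have : α * x < α * (1 - α / 2) := by gcongr
      rw [codedLetter_eq hz'' (by linarith) (by linarith), windowLetter, windowLetter,
        windowLetter, if_neg (by linarith), if_neg (by linarith), if_pos hc,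
        if_neg (by linarith), if_neg (by linarith), if_pos (by linarith), if_pos (by linarith)]
      rfl
    · have : α * (1 - α / 2) < α * x := by gcongr
      rw [codedLetter_eq hz' (by linarith) (by linarith), windowLetter, windowLetter,
        windowLetter, if_neg (by linarith), if_neg (by linarith), if_neg (by linarith),
        if_neg (by linarith), if_pos (by linarith), if_neg (by linarith), if_neg (by linarith),
        if_neg (by linarith)]
      rfl

theorem sigmaW_map_codedLetter {α : ℝ} (h : IsInverseGolden α) (n : ℕ) :
    sigmaW ((List.range n).map (codedLetter α)) =
      (List.range (blockStart α n)).map (codedLetter α) := by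
  induction n with
  | zero =>
    have : blockStart α 0 = 0 := by
      simp only [blockStart, Nat.cast_zero, zero_mul, zero_add, Nat.floor_eq_zero]
      norm_num
    simp [this, sigmaW]
  | succ n ih =>
    obtain ⟨hle, hstep⟩ := sigmaL_codedLetter h n
    have hsplit : List.range (blockStart α (n + 1)) = List.range (blockStart α n) ++
        List.range' (blockStart α n) (blockStart α (n + 1) - blockStart α n) := by
      rw [List.range_eq_range', List.range_eq_range']
      have := List.range'_append_1 (s := 0) (m := blockStart α n)
        (n := blockStart α (n + 1) - blockStart α n)
      rw [zero_add, Nat.add_sub_cancel' hle] at this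
      exact this.symm
    rw [hsplit, List.map_append, ← ih, ← hstep, List.range_succ]
    simp [sigmaW]

theorem exists_sigmaW_iterate_eq {α : ℝ} (h : IsInverseGolden α) (n : ℕ) :
    ∃ k, sigmaW^[n] [Letter.A] = (List.range k).map (codedLetter α) := by
  induction n with
  | zero =>
    obtain ⟨hpos, hhalf, hlt, -, -⟩ := h
    have hzero : codedLetter α 0 = A := by
      rw [codedLetter_eq (x := 1 / 2) (k := 0) (by simp) (by norm_num) (by norm_num),
        windowLetter, if_neg (by linarith), if_neg (by linarith), if_pos (by linarith)]
    exact ⟨1, by simp [hzero]⟩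
  | succ n ih =>
    obtain ⟨k, hk⟩ := ih
    exact ⟨blockStart α k, by
      rw [Function.iterate_succ_apply', hk, sigmaW_map_codedLetter h]⟩

/-- For every `n`, projecting `σⁿ(A)` to `{0,1}` (via `A, A′ ↦ 1`,
`B, B′ ↦ 0`) yields the prefix `(h(0), h(1), …, h(L-1))` of `h = h_{AA}`, where
`L = |σⁿ(A)|`; hence the projection of the fixed point of `σ` starting with `A` is
`h_{AA}`. -/
theorem sigma_iterate_proj_eq_hseq (α : ℝ) (hα : α = (Real.sqrt 5 - 1) / 2) :
    ∀ n : ℕ,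
      (sigmaW^[n] [Letter.A]).map projL =
        (List.range (sigmaW^[n] [Letter.A]).length).map (fun m => hseq α m) := by
  intro n
  obtain ⟨k, hk⟩ := exists_sigmaW_iterate_eq (isInverseGolden_of_eq hα) n
  rw [hk]
  simp only [List.map_map, List.length_map, List.length_range]
  exact List.map_congr_left fun m _ => projL_codedLetter (isInverseGolden_of_eq hα) m
end

section
/- Let k ≥ 1 and 0 ≤ j ≤ q_{k−1} − 1, set n = q_k + j, and assume n ≥ 2 (so that f(n) = q_{k+1} + q_k − 1 + j). Then among the n+1 factors of v₀ of length n: exactly q_{k−1} − 1 − j of them (namely those occurring in the prefix (v₀(1), …, v₀(q_k + q_{k−1} − 2))) occur exactly a_{k+1} + 1 times as subwords of (v₀(1), …, v₀(f(n))); exactly q_k − q_{k−1} + 1 + j of them occur exactly a_{k+1} times; and exactly j + 1 of them occur exactly once. -/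
open scoped Classical

noncomputable section

/-- The numerators of the convergents, indexed like `qd`. -/
def pn (α : ℝ) : ℕ → ℤ
  | 0 => 1
  | 1 => 0
  | (n+2) => pq α n * pn α (n+1) + pn α n

/-- The signed approximation error `q α - p` of a convergent, indexed like `qd`. -/
def err (α : ℝ) (k : ℕ) : ℝ := qd α k * α - pn α k

theorem gaussMap_iterate_spec {α : ℝ} (hirr : Irrational α) (h0 : 0 < α) (h1 : α < 1) (k : ℕ) :
    Irrational (gaussMap^[k] α) ∧ 0 < gaussMap^[k] α ∧ gaussMap^[k] α < 1 := by
  induction k with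
  | zero => exact ⟨hirr, h0, h1⟩
  | succ k ih =>
    rw [Function.iterate_succ_apply']
    obtain ⟨hi, -, -⟩ := ih
    have hf : Irrational (gaussMap (gaussMap^[k] α)) := by
      unfold gaussMap Int.fract
      exact hi.inv.sub_intCast _
    exact ⟨hf, lt_of_le_of_ne (Int.fract_nonneg _) hf.ne_zero.symm, Int.fract_lt_one _⟩

theorem one_le_pq {α : ℝ} (hirr : Irrational α) (h0 : 0 < α) (h1 : α < 1) (k : ℕ) :
    1 ≤ pq α k := by
  obtain ⟨-, hp, hl⟩ := gaussMap_iterate_spec hirr h0 h1 k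
  exact Nat.le_floor (by simpa using (one_le_inv₀ hp).2 hl.le)

theorem err_succ {α : ℝ} (hirr : Irrational α) (h0 : 0 < α) (h1 : α < 1) (k : ℕ) :
    err α (k + 1) = -(gaussMap^[k] α) * err α k := by
  induction k with
  | zero => simp [err, qd, pn]
  | succ k ih =>
    obtain ⟨-, hp, -⟩ := gaussMap_iterate_spec hirr h0 h1 k
    have hrec : err α (k + 2) = pq α k * err α (k + 1) + err α k := by
      simp only [err, qd, pn]; push_cast; ring
    have hg : gaussMap^[k + 1] α = (gaussMap^[k] α)⁻¹ - pq α k := by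
      rw [Function.iterate_succ_apply']
      unfold gaussMap pq
      rw [← Int.self_sub_floor, natCast_floor_eq_intCast_floor (inv_nonneg.2 hp.le)]
      rfl
    rw [hrec, hg, ih]
    field_simp
    ring

theorem err_ne_zero {α : ℝ} (hirr : Irrational α) (h0 : 0 < α) (h1 : α < 1) (k : ℕ) :
    err α k ≠ 0 := by
  induction k with
  | zero => simp [err, qd, pn]
  | succ k ih =>
    rw [err_succ hirr h0 h1]
    exact mul_ne_zero (neg_ne_zero.2 (gaussMap_iterate_spec hirr h0 h1 k).2.1.ne') ih

theorem abs_err_succ_lt {α : ℝ} (hirr : Irrational α) (h0 : 0 < α) (h1 : α < 1) (k : ℕ) :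
    |err α (k + 1)| < |err α k| := by
  obtain ⟨-, hp, hl⟩ := gaussMap_iterate_spec hirr h0 h1 k
  rw [err_succ hirr h0 h1, abs_mul, abs_neg, abs_of_pos hp]
  exact mul_lt_of_lt_one_left (abs_pos.2 (err_ne_zero hirr h0 h1 k)) hl

theorem abs_err_succ_lt_one {α : ℝ} (hirr : Irrational α) (h0 : 0 < α) (h1 : α < 1) (k : ℕ) :
    |err α (k + 1)| < 1 := by
  induction k with
  | zero => simpa [err, qd, pn, abs_of_pos h0] using h1
  | succ k ih => exact (abs_err_succ_lt hirr h0 h1 _).trans ih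

/-- Consecutive errors have opposite signs. -/
theorem err_signs {α : ℝ} (hirr : Irrational α) (h0 : 0 < α) (h1 : α < 1) (k : ℕ) :
    (0 < err α k ∧ err α (k + 1) < 0) ∨ (err α k < 0 ∧ 0 < err α (k + 1)) := by
  obtain ⟨-, hp, -⟩ := gaussMap_iterate_spec hirr h0 h1 k
  rw [err_succ hirr h0 h1]
  rcases (err_ne_zero hirr h0 h1 k).lt_or_gt with h | h
  · exact Or.inr ⟨h, mul_pos_of_neg_of_neg (neg_neg_of_pos hp) h⟩
  · exact Or.inl ⟨h, mul_neg_of_neg_of_pos (neg_neg_of_pos hp) h⟩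

theorem qd_pn_det (α : ℝ) (k : ℕ) :
    ((qd α k : ℤ) * pn α (k + 1) - qd α (k + 1) * pn α k) ^ 2 = 1 := by
  induction k with
  | zero => simp [qd, pn]
  | succ k ih =>
    rw [← ih]
    simp only [qd, pn]
    push_cast
    ring

theorem isCoprime_qd_pn (α : ℝ) (k : ℕ) : IsCoprime (qd α (k + 1) : ℤ) (pn α (k + 1)) := by
  refine ⟨-pn α k * ((qd α k : ℤ) * pn α (k + 1) - qd α (k + 1) * pn α k),
    qd α k * ((qd α k : ℤ) * pn α (k + 1) - qd α (k + 1) * pn α k), ?_⟩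
  rw [← qd_pn_det α k]
  ring

theorem qd_pos {α : ℝ} (hirr : Irrational α) (h0 : 0 < α) (h1 : α < 1) (k : ℕ) :
    0 < qd α (k + 1) := by
  induction k with
  | zero => simp [qd]
  | succ k ih =>
    have := Nat.mul_pos (one_le_pq hirr h0 h1 k) ih
    simp only [qd]
    omega

theorem qd_add_le {α : ℝ} (hirr : Irrational α) (h0 : 0 < α) (h1 : α < 1) (k : ℕ) :
    qd α (k + 1) + qd α k ≤ qd α (k + 2) := by
  have := Nat.mul_le_mul_right (qd α (k + 1)) (one_le_pq hirr h0 h1 k)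
  simp only [qd]
  omega

theorem qd_le_succ {α : ℝ} (hirr : Irrational α) (h0 : 0 < α) (h1 : α < 1) (k : ℕ) :
    qd α k ≤ qd α (k + 1) := by
  cases k with
  | zero => simp [qd]
  | succ k => exact le_trans (Nat.le_add_right _ _) (qd_add_le hirr h0 h1 k)

/-- In the lattice basis given by two consecutive convergents, a pair `(l, P)` whose `l` is positive
and below the larger denominator has coordinates of opposite signs. -/
theorem approx_dichotomy {α : ℝ} (k : ℕ) {l : ℕ} (P : ℤ)
    (hl : 0 < l) (hlQ : l < qd α (k + 1)) :
    ∃ x y : ℤ, (l : ℝ) * α - P = x * err α k + y * err α (k + 1) ∧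
      ((1 ≤ y ∧ x ≤ -1) ∨ (y ≤ 0 ∧ 1 ≤ x)) := by
  obtain ⟨e, he⟩ : ∃ e, e = (qd α k : ℤ) * pn α (k + 1) - qd α (k + 1) * pn α k := ⟨_, rfl⟩
  have he2 : e ^ 2 = 1 := he ▸ qd_pn_det α k
  obtain ⟨x, hx⟩ : ∃ x, x = e * ((l : ℤ) * pn α (k + 1) - qd α (k + 1) * P) := ⟨_, rfl⟩
  obtain ⟨y, hy⟩ : ∃ y, y = e * ((qd α k : ℤ) * P - l * pn α k) := ⟨_, rfl⟩
  have h1 : (l : ℤ) = x * qd α k + y * qd α (k + 1) := by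
    have : x * qd α k + y * qd α (k + 1) = e ^ 2 * l := by
      rw [pow_two]; nth_rewrite 2 [he]; rw [hx, hy]; ring
    rw [this, he2, one_mul]
  have h2 : P = x * pn α k + y * pn α (k + 1) := by
    have : x * pn α k + y * pn α (k + 1) = e ^ 2 * P := by
      rw [pow_two]; nth_rewrite 2 [he]; rw [hx, hy]; ring
    rw [this, he2, one_mul]
  refine ⟨x, y, ?_, ?_⟩
  · have h1' : (l : ℝ) = x * qd α k + y * qd α (k + 1) := by exact_mod_cast h1
    have h2' : (P : ℝ) = x * pn α k + y * pn α (k + 1) := by exact_mod_cast h2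
    rw [h1', h2', err, err]
    ring
  · have hq : (0 : ℤ) ≤ qd α k := by positivity
    have hQ : (0 : ℤ) ≤ qd α (k + 1) := by positivity
    have hl' : (0 : ℤ) < l := by exact_mod_cast hl
    have hlQ' : (l : ℤ) < qd α (k + 1) := by exact_mod_cast hlQ
    rcases le_or_gt 1 y with hy1 | hy1
    · left
      refine ⟨hy1, ?_⟩
      by_contra hc
      have : 0 ≤ x := by omega
      nlinarith
    · right
      refine ⟨by omega, ?_⟩
      by_contra hc
      have : x ≤ 0 := by omega
      have : y ≤ 0 := by omega
      nlinarith

theorem floor_add_qd {α : ℝ} (hirr : Irrational α) (h0 : 0 < α) (h1 : α < 1) (k : ℕ) {l : ℕ}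
    (hl : 0 < l) (hlQ : l < qd α (k + 2)) :
    ⌊((l + qd α (k + 1) : ℕ) : ℝ) * α⌋ = ⌊(l : ℝ) * α⌋ + pn α (k + 1) := by
  have hsum : ((l + qd α (k + 1) : ℕ) : ℝ) * α = l * α + err α (k + 1) + pn α (k + 1) := by
    rw [err]; push_cast; ring
  rw [hsum, Int.floor_add_intCast, add_left_inj]
  rcases err_signs hirr h0 h1 (k + 1) with ⟨hs, hs'⟩ | ⟨hs, hs'⟩
  · refine le_antisymm ?_ (Int.floor_le_floor (by linarith))
    obtain ⟨x, y, hxy, h⟩ := approx_dichotomy (α := α) (k + 1) (⌊(l : ℝ) * α + err α (k + 1)⌋) hl hlQ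
    have hle := Int.floor_le ((l : ℝ) * α + err α (k + 1))
    refine Int.le_floor.2 ?_
    rcases h with ⟨hy, hx⟩ | ⟨hy, hx⟩
    · have hy' : (1 : ℝ) ≤ y := by exact_mod_cast hy
      have hx' : (x : ℝ) ≤ -1 := by exact_mod_cast hx
      nlinarith
    · have hy' : (y : ℝ) ≤ 0 := by exact_mod_cast hy
      have hx' : (1 : ℝ) ≤ x := by exact_mod_cast hx
      nlinarith
  · refine le_antisymm (Int.floor_le_floor (by linarith)) ?_
    obtain ⟨x, y, hxy, h⟩ := approx_dichotomy (α := α) (k + 1) (⌊(l : ℝ) * α⌋) hl hlQ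
    have hle := Int.floor_le ((l : ℝ) * α)
    refine Int.le_floor.2 ?_
    rcases h with ⟨hy, hx⟩ | ⟨hy, hx⟩
    · have hy' : (1 : ℝ) ≤ y := by exact_mod_cast hy
      have hx' : (x : ℝ) ≤ -1 := by exact_mod_cast hx
      nlinarith
    · have hy' : (y : ℝ) ≤ 0 := by exact_mod_cast hy
      have hx' : (1 : ℝ) ≤ x := by exact_mod_cast hx
      nlinarith

theorem floor_qd_add_qd_ne {α : ℝ} (hirr : Irrational α) (h0 : 0 < α) (h1 : α < 1) (k : ℕ) :
    ⌊((qd α (k + 2) + qd α (k + 1) : ℕ) : ℝ) * α⌋ ≠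
      ⌊(qd α (k + 2) : ℝ) * α⌋ + pn α (k + 1) := by
  have hsum : ((qd α (k + 2) + qd α (k + 1) : ℕ) : ℝ) * α =
      err α (k + 2) + err α (k + 1) + pn α (k + 2) + pn α (k + 1) := by
    rw [err, err]; push_cast; ring
  have hQ : (qd α (k + 2) : ℝ) * α = err α (k + 2) + pn α (k + 2) := by rw [err]; ring
  rw [hsum, hQ, Int.floor_add_intCast, Int.floor_add_intCast, Int.floor_add_intCast]
  have hlt := abs_err_succ_lt hirr h0 h1 (k + 1)
  have hone := abs_err_succ_lt_one hirr h0 h1 k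
  intro h
  have h : ⌊err α (k + 2) + err α (k + 1)⌋ = ⌊err α (k + 2)⌋ := by linarith
  rcases err_signs hirr h0 h1 (k + 1) with ⟨hs, hs'⟩ | ⟨hs, hs'⟩
  · rw [abs_of_pos hs, abs_of_neg hs'] at hlt
    have ha : 0 ≤ ⌊err α (k + 2) + err α (k + 1)⌋ := Int.floor_nonneg.2 (by linarith)
    have hb : ⌊err α (k + 2)⌋ < 0 := Int.floor_lt.2 (by simpa using hs')
    omega
  · rw [abs_of_neg hs, abs_of_pos hs'] at hlt
    have ha : ⌊err α (k + 2) + err α (k + 1)⌋ < 0 := Int.floor_lt.2 (by push_cast; linarith)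
    have hb : 0 ≤ ⌊err α (k + 2)⌋ := Int.floor_nonneg.2 hs'.le
    omega

theorem floor_succ_mul {α : ℝ} (h0 : 0 < α) (h1 : α < 1) (l : ℕ) :
    ⌊((l + 1 : ℕ) : ℝ) * α⌋ = ⌊(l : ℝ) * α⌋ + (v0 α l).toNat := by
  have hf := Int.floor_add_fract ((l : ℝ) * α)
  have hn := Int.fract_nonneg ((l : ℝ) * α)
  have hl := Int.fract_lt_one ((l : ℝ) * α)
  unfold v0
  rw [Int.floor_eq_iff]
  by_cases h : 1 - α ≤ Int.fract ((l : ℝ) * α)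
  · simp only [Int.cast_natCast, h, decide_true, Bool.toNat_true]
    push_cast
    constructor <;> linarith
  · simp only [Int.cast_natCast, h, decide_false, Bool.toNat_false]
    push_cast
    constructor <;> linarith

theorem length_word (α : ℝ) (m n : ℕ) : (word α m n).length = n := by simp [word]

theorem word_eq_iff_v0 (α : ℝ) (m m' n : ℕ) :
    word α m n = word α m' n ↔
      ∀ i < n, v0 α ((m + 1 + i : ℕ) : ℤ) = v0 α ((m' + 1 + i : ℕ) : ℤ) := by
  simp only [word, List.bind_eq_flatMap, List.pure_def, List.map_inj_left, List.mem_flatMap,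
    List.mem_range, List.mem_singleton]
  push_cast
  exact ⟨fun h i hi => h i ⟨i, hi, rfl⟩, fun h a ⟨i, hi, ha⟩ => ha ▸ h i hi⟩

/-- Equality of words in terms of the integer parts of the multiples of `α`. -/
theorem word_eq_iff {α : ℝ} (h0 : 0 < α) (h1 : α < 1) (m m' n : ℕ) :
    word α m n = word α m' n ↔ ∀ i ≤ n,
      ⌊((m + 1 + i : ℕ) : ℝ) * α⌋ - ⌊((m + 1 : ℕ) : ℝ) * α⌋ =
        ⌊((m' + 1 + i : ℕ) : ℝ) * α⌋ - ⌊((m' + 1 : ℕ) : ℝ) * α⌋ := by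
  rw [word_eq_iff_v0]
  constructor
  · intro h i
    induction i with
    | zero => simp
    | succ i ih =>
      intro hi
      have e := floor_succ_mul h0 h1 (m + 1 + i)
      have e' := floor_succ_mul h0 h1 (m' + 1 + i)
      have ih := ih (by omega)
      rw [h i (by omega)] at e
      rw [← add_assoc, ← add_assoc, e, e']
      omega
  · intro h i hi
    have e := floor_succ_mul h0 h1 (m + 1 + i)
    have e' := floor_succ_mul h0 h1 (m' + 1 + i)
    have hi0 := h i (by omega)
    have hi1 := h (i + 1) (by omega)
    rw [← add_assoc, ← add_assoc, e, e'] at hi1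
    have : (v0 α ((m + 1 + i : ℕ) : ℤ)).toNat = (v0 α ((m' + 1 + i : ℕ) : ℤ)).toNat := by omega
    revert this
    cases v0 α ((m + 1 + i : ℕ) : ℤ) <;> cases v0 α ((m' + 1 + i : ℕ) : ℤ) <;> simp

/-- The total carry of the rotation along a window; it determines the word of the window. -/
def carry (α : ℝ) (n m : ℕ) : ℤ :=
  ∑ i ∈ Finset.range n,
    (⌊Int.fract (((m + 1 : ℕ) : ℝ) * α) + (i + 1 : ℕ) * α⌋ - ⌊((i + 1 : ℕ) : ℝ) * α⌋)

theorem carry_mem (α : ℝ) (n m : ℕ) : carry α n m ∈ Finset.Icc (0 : ℤ) n := by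
  have hn := Int.fract_nonneg (((m + 1 : ℕ) : ℝ) * α)
  have hl := Int.fract_lt_one (((m + 1 : ℕ) : ℝ) * α)
  rw [Finset.mem_Icc]
  constructor
  · exact Finset.sum_nonneg fun i _ => sub_nonneg.2 (Int.floor_le_floor (by linarith))
  · refine (Finset.sum_le_card_nsmul _ _ 1 fun i _ => ?_).trans (by simp)
    have : ⌊Int.fract (((m + 1 : ℕ) : ℝ) * α) + (i + 1 : ℕ) * α⌋ ≤
        ⌊((i + 1 : ℕ) : ℝ) * α + 1⌋ := Int.floor_le_floor (by linarith)
    rw [Int.floor_add_one] at this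
    omega

theorem word_eq_of_carry_eq {α : ℝ} (h0 : 0 < α) (h1 : α < 1) {m m' n : ℕ}
    (h : carry α n m = carry α n m') : word α m n = word α m' n := by
  wlog hle : Int.fract (((m + 1 : ℕ) : ℝ) * α) ≤ Int.fract (((m' + 1 : ℕ) : ℝ) * α)
    generalizing m m'
  · exact (this h.symm (le_of_not_ge hle)).symm
  have hterm := (Finset.sum_eq_sum_iff_of_le fun i _ => sub_le_sub_right
    (Int.floor_le_floor (by linarith)) _).1 h
  have key : ∀ (m i : ℕ), ⌊((m + 1 + i : ℕ) : ℝ) * α⌋ - ⌊((m + 1 : ℕ) : ℝ) * α⌋ =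
      ⌊Int.fract (((m + 1 : ℕ) : ℝ) * α) + i * α⌋ := by
    intro m i
    rw [← Int.floor_sub_intCast, Int.fract]
    congr 1
    push_cast
    ring
  rw [word_eq_iff h0 h1]
  intro i hi
  rw [key, key]
  cases i with
  | zero => simp
  | succ i =>
    have := hterm i (Finset.mem_range.2 (by omega))
    omega

/-- If `G` is quasi-periodic with coprime data `(q, p)`, it has no other quasi-period `d < q`
on a window of length `q`. -/
theorem no_shorter_period {G : ℕ → ℤ} {q d m : ℕ} {p P : ℤ} (hcop : IsCoprime (q : ℤ) p)
    (hd : 0 < d) (hdq : d < q) (hG : ∀ l, G (l + q) = G l + p)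
    (hw : ∀ i < q, G (m + i + d) = G (m + i) + P) : False := by
  have hGmul : ∀ l t, G (l + q * t) = G l + t * p := by
    intro l t
    induction t with
    | zero => simp
    | succ t ih => rw [Nat.mul_succ, ← add_assoc, hG, ih]; push_cast; ring
  have hall : ∀ i, G (m + i + d) = G (m + i) + P := by
    intro i
    have h := hw (i % q) (Nat.mod_lt _ (by omega))
    have e1 : m + i + d = m + i % q + d + q * (i / q) := by have := Nat.mod_add_div i q; omega
    have e2 : m + i = m + i % q + q * (i / q) := by have := Nat.mod_add_div i q; omega
    rw [e1, hGmul, h]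
    conv_rhs => rw [e2, hGmul]
    ring
  have hmul : ∀ t : ℕ, G (m + t * d) = G m + t * P := by
    intro t
    induction t with
    | zero => simp
    | succ t ih => rw [Nat.succ_mul, ← add_assoc, hall, ih]; push_cast; ring
  have hfin : (q : ℤ) * P = d * p := by
    have a := hmul q
    have b := hGmul m d
    linarith
  have hdvd : (q : ℤ) ∣ d := hcop.dvd_of_dvd_mul_right ⟨P, hfin.symm⟩
  have := Nat.le_of_dvd hd (Int.natCast_dvd_natCast.1 hdvd)
  omega

section Window

variable {α : ℝ} {k j n : ℕ}

theorem word_eq_word_mod (hirr : Irrational α) (h0 : 0 < α) (h1 : α < 1)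
    (hn : n = qd α (k + 1) + j) {m : ℕ} (hm : m + j + 1 < qd α (k + 2)) :
    word α m n = word α (m % qd α (k + 1)) n := by
  induction m using Nat.strong_induction_on with
  | _ m ih =>
    rcases lt_or_ge m (qd α (k + 1)) with h | h
    · rw [Nat.mod_eq_of_lt h]
    · obtain ⟨r, rfl⟩ := Nat.exists_eq_add_of_le' h
      have hq := qd_pos hirr h0 h1 k
      rw [Nat.add_mod_right, ← ih r (by omega) (by omega), word_eq_iff h0 h1]
      intro i hi
      have e1 := floor_add_qd hirr h0 h1 k (l := r + 1 + i) (by omega)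
        (by subst hn; omega)
      have e2 := floor_add_qd hirr h0 h1 k (l := r + 1) (by omega) (by omega)
      rw [show r + qd α (k + 1) + 1 + i = r + 1 + i + qd α (k + 1) by ring,
        show r + qd α (k + 1) + 1 = r + 1 + qd α (k + 1) by ring, e1, e2]
      ring

theorem word_ne_of_lt_qd (hirr : Irrational α) (h0 : 0 < α) (h1 : α < 1)
    (hn : n = qd α (k + 1) + j) {m m' : ℕ} (hlt : m < m') (hm' : m' < qd α (k + 1)) :
    word α m n ≠ word α m' n := by
  intro h
  rw [word_eq_iff h0 h1] at h
  obtain ⟨q, hq⟩ : ∃ q, q = qd α (k + 1) := ⟨_, rfl⟩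
  have hqQ : qd α (k + 1) ≤ qd α (k + 2) := qd_le_succ hirr h0 h1 (k + 1)
  let G : ℕ → ℤ := fun l => ⌊((l % q + 1 : ℕ) : ℝ) * α⌋ + (l / q : ℕ) * pn α (k + 1)
  have hGq : ∀ l, G (l + q) = G l + pn α (k + 1) := by
    intro l
    simp only [G]
    rw [Nat.add_mod_right, Nat.add_div_right _ (by omega)]
    push_cast
    ring
  have hGF : ∀ l < 2 * q, l < qd α (k + 2) + q - 1 → G l = ⌊((l + 1 : ℕ) : ℝ) * α⌋ := by
    intro l hl hlQ
    rcases lt_or_ge l q with hlq | hlq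
    · simp only [G, Nat.mod_eq_of_lt hlq, Nat.div_eq_of_lt hlq, Nat.cast_zero, zero_mul, add_zero]
    · obtain ⟨r, rfl⟩ := Nat.exists_eq_add_of_le' hlq
      rw [hGq, show r + q + 1 = r + 1 + qd α (k + 1) by omega,
        floor_add_qd hirr h0 h1 k (by omega) (by omega)]
      have hr : r < q := by omega
      simp only [G, Nat.mod_eq_of_lt hr, Nat.div_eq_of_lt hr, Nat.cast_zero, zero_mul, add_zero]
  refine no_shorter_period (G := G) (q := q) (d := m' - m) (m := m) (p := pn α (k + 1))
    (P := ⌊((m' + 1 : ℕ) : ℝ) * α⌋ - ⌊((m + 1 : ℕ) : ℝ) * α⌋)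
    (hq ▸ isCoprime_qd_pn α k) (by omega) (by omega) hGq ?_
  intro i hi
  have hi' := h i (by omega)
  rw [hGF _ (by omega) (by omega), hGF _ (by omega) (by omega),
    show m + i + (m' - m) + 1 = m' + 1 + i by omega, show m + i + 1 = m + 1 + i by omega]
  omega

/-- A window that reaches `q_{k+1}` sees the breakdown of the quasi-period `q_k`, and at a place
that determines the window. -/
theorem word_ne_of_tail (hirr : Irrational α) (h0 : 0 < α) (h1 : α < 1)
    (hn : n = qd α (k + 1) + j) {m m' : ℕ} (hlt : m < m') (hm' : m' < qd α (k + 2))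
    (htail : qd α (k + 2) ≤ m' + j + 1) : word α m n ≠ word α m' n := by
  intro h
  rw [word_eq_iff h0 h1] at h
  obtain ⟨i, hi⟩ : ∃ i, m' + 1 + i = qd α (k + 2) := ⟨qd α (k + 2) - 1 - m', by omega⟩
  have ha := h i (by omega)
  have hb := h (i + qd α (k + 1)) (by omega)
  have hne := floor_qd_add_qd_ne hirr h0 h1 k
  rw [← add_assoc, ← add_assoc, hi,
    floor_add_qd hirr h0 h1 k (by omega) (by omega)] at hb
  rw [hi] at ha
  apply hne
  omega

theorem word_eq_word_iff (hirr : Irrational α) (h0 : 0 < α) (h1 : α < 1)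
    (hn : n = qd α (k + 1) + j) {m m' : ℕ} (hm : m < qd α (k + 2)) (hm' : m' < qd α (k + 2)) :
    word α m n = word α m' n ↔ m = m' ∨ (m + j + 1 < qd α (k + 2) ∧
      m' + j + 1 < qd α (k + 2) ∧ m % qd α (k + 1) = m' % qd α (k + 1)) := by
  have hq := qd_pos hirr h0 h1 k
  constructor
  · intro h
    by_cases hb : m + j + 1 < qd α (k + 2) ∧ m' + j + 1 < qd α (k + 2)
    · refine Or.inr ⟨hb.1, hb.2, ?_⟩
      rw [word_eq_word_mod hirr h0 h1 hn hb.1, word_eq_word_mod hirr h0 h1 hn hb.2] at h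
      rcases lt_trichotomy (m % qd α (k + 1)) (m' % qd α (k + 1)) with hlt | heq | hlt
      · exact (word_ne_of_lt_qd hirr h0 h1 hn hlt (Nat.mod_lt _ hq) h).elim
      · exact heq
      · exact (word_ne_of_lt_qd hirr h0 h1 hn hlt (Nat.mod_lt _ hq) h.symm).elim
    · left
      rcases lt_trichotomy m m' with hlt | heq | hlt
      · exact (word_ne_of_tail hirr h0 h1 hn hlt hm' (by omega) h).elim
      · exact heq
      · exact (word_ne_of_tail hirr h0 h1 hn hlt hm (by omega) h.symm).elim
  · rintro (rfl | ⟨ha, hb, hc⟩)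
    · rfl
    · rw [word_eq_word_mod hirr h0 h1 hn ha, word_eq_word_mod hirr h0 h1 hn hb, hc]

/-- Every word of length `n` already starts at one of the first `q_k` positions or at one of the
`j + 1` positions preceding `q_{k+1}`. -/
theorem exists_word_eq (hirr : Irrational α) (h0 : 0 < α) (h1 : α < 1)
    (hn : n = qd α (k + 1) + j) (hj : qd α (k + 1) + j + 1 ≤ qd α (k + 2)) (m : ℕ) :
    ∃ s, (s < qd α (k + 1) ∨ (qd α (k + 2) - 1 - j ≤ s ∧ s < qd α (k + 2))) ∧
      word α s n = word α m n := by
  set S : Finset ℕ := Finset.range (qd α (k + 1)) ∪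
    Finset.Ico (qd α (k + 2) - 1 - j) (qd α (k + 2)) with hS
  have hmem : ∀ s, s ∈ S ↔
      (s < qd α (k + 1) ∨ (qd α (k + 2) - 1 - j ≤ s ∧ s < qd α (k + 2))) := by
    intro s; simp [hS]
  have hcard : S.card = n + 1 := by
    rw [hS, Finset.card_union_of_disjoint]
    · simp only [Finset.card_range, Nat.card_Ico]; omega
    · rw [Finset.disjoint_left]
      intro a ha hb
      simp only [Finset.mem_range, Finset.mem_Ico] at ha hb
      omega
  have hinj : Set.InjOn (carry α n) S := by
    intro s hs t ht hst
    rw [Finset.mem_coe, hmem] at hs ht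
    have hw := word_eq_of_carry_eq h0 h1 hst
    rw [word_eq_word_iff hirr h0 h1 hn (by omega) (by omega)] at hw
    rcases hw with h | ⟨ha, hb, hc⟩
    · exact h
    · rwa [Nat.mod_eq_of_lt (by omega), Nat.mod_eq_of_lt (by omega)] at hc
  have himg : S.image (carry α n) = Finset.Icc (0 : ℤ) n := by
    apply Finset.eq_of_subset_of_card_le
    · intro c hc
      obtain ⟨s, -, rfl⟩ := Finset.mem_image.1 hc
      exact carry_mem α n s
    · rw [Finset.card_image_of_injOn hinj, hcard]
      simp
  obtain ⟨s, hs, hc⟩ := Finset.mem_image.1 (himg ▸ carry_mem α n m)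
  exact ⟨s, (hmem s).1 hs, word_eq_of_carry_eq h0 h1 hc⟩

theorem exhaust_eq (hirr : Irrational α) (h0 : 0 < α) (h1 : α < 1)
    (hn : n = qd α (k + 1) + j) (hj : qd α (k + 1) + j + 1 ≤ qd α (k + 2)) :
    exhaust α n = qd α (k + 2) - 1 + n := by
  apply IsLeast.csInf_eq
  constructor
  · rintro w hw ⟨m, hm⟩
    obtain ⟨s, hs, hsm⟩ := exists_word_eq hirr h0 h1 hn hj m
    refine ⟨s, by omega, ?_⟩
    rw [hw] at hm ⊢
    rw [hm, hsm]
  · intro N hN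
    obtain ⟨m, hmN, hm⟩ := hN (word α (qd α (k + 2) - 1) n) (length_word _ _ _)
      ⟨_, by rw [length_word]⟩
    rw [length_word] at hmN hm
    by_contra hc
    rw [word_eq_word_iff hirr h0 h1 hn (by omega) (by omega)] at hm
    omega

theorem occCount_word_eq (hirr : Irrational α) (h0 : 0 < α) (h1 : α < 1)
    (hn : n = qd α (k + 1) + j) (hj : qd α (k + 1) + j + 1 ≤ qd α (k + 2)) {s : ℕ} :
    occCount α (word α s n) (exhaust α n) =
      ((Finset.range (qd α (k + 2))).filter (fun m => word α m n = word α s n)).card := by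
  have hq := qd_pos hirr h0 h1 k
  rw [occCount, exhaust_eq hirr h0 h1 hn hj]
  congr 1
  ext m
  simp only [length_word, Finset.mem_filter, Finset.mem_range]
  constructor
  · rintro ⟨ha, hb, hc⟩
    exact ⟨by omega, hc⟩
  · rintro ⟨ha, hc⟩
    exact ⟨by omega, by omega, hc⟩

theorem occCount_word_of_tail (hirr : Irrational α) (h0 : 0 < α) (h1 : α < 1)
    (hn : n = qd α (k + 1) + j) (hj : qd α (k + 1) + j + 1 ≤ qd α (k + 2)) {s : ℕ}
    (hs : qd α (k + 2) - 1 - j ≤ s) (hs' : s < qd α (k + 2)) :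
    occCount α (word α s n) (exhaust α n) = 1 := by
  rw [occCount_word_eq hirr h0 h1 hn hj, Finset.card_eq_one]
  refine ⟨s, ?_⟩
  ext m
  simp only [Finset.mem_filter, Finset.mem_range, Finset.mem_singleton]
  constructor
  · rintro ⟨ha, hb⟩
    rw [word_eq_word_iff hirr h0 h1 hn ha hs'] at hb
    omega
  · rintro rfl
    exact ⟨hs', rfl⟩

theorem occCount_word_of_lt_qd (hirr : Irrational α) (h0 : 0 < α) (h1 : α < 1)
    (hn : n = qd α (k + 1) + j) (hj : j + 1 ≤ qd α k) {s : ℕ} (hs : s < qd α (k + 1)) :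
    occCount α (word α s n) (exhaust α n) =
      pq α k + if s < qd α k - 1 - j then 1 else 0 := by
  have hadd := qd_add_le hirr h0 h1 k
  have hle := qd_le_succ hirr h0 h1 k
  have hrec : qd α (k + 2) = pq α k * qd α (k + 1) + qd α k := rfl
  have hb : qd α (k + 2) - 1 - j = (qd α k - 1 - j) + qd α (k + 1) * pq α k := by
    rw [hrec, mul_comm]; omega
  have hcount := Nat.count_modEq_card (qd α (k + 2) - 1 - j) (show 0 < qd α (k + 1) by omega) s
  rw [Nat.count_eq_card_filter_range] at hcount
  have hd : (qd α (k + 2) - 1 - j) / qd α (k + 1) = pq α k := by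
    rw [hb, Nat.add_mul_div_left _ _ (by omega), Nat.div_eq_of_lt (by omega), zero_add]
  have hm : (qd α (k + 2) - 1 - j) % qd α (k + 1) = qd α k - 1 - j := by
    rw [hb, Nat.add_mul_mod_self_left, Nat.mod_eq_of_lt (by omega)]
  rw [hd, hm, Nat.mod_eq_of_lt hs] at hcount
  rw [occCount_word_eq hirr h0 h1 hn (by omega), ← hcount]
  congr 1
  ext m
  simp only [Finset.mem_filter, Finset.mem_range]
  constructor
  · rintro ⟨ha, h⟩
    rw [word_eq_word_iff hirr h0 h1 hn ha (by omega)] at h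
    rcases h with rfl | ⟨h, -, h'⟩
    · exact ⟨by omega, rfl⟩
    · exact ⟨by omega, h'⟩
  · rintro ⟨ha, h⟩
    refine ⟨by omega, ?_⟩
    rw [word_eq_word_iff hirr h0 h1 hn (by omega) (by omega)]
    exact Or.inr ⟨by omega, by omega, h⟩

end Window

/-- For `n = q_k + j` (`k ≥ 1`, `0 ≤ j ≤ q_{k-1} - 1`, `n ≥ 2`), the
`n + 1` factors of `v₀` of length `n` split into three disjoint classes `A, B, C`:
`A` consists of the `q_{k-1} - 1 - j` factors occurring in
`(v₀(1), …, v₀(q_k + q_{k-1} - 2))`, each of which occurs exactly `a_{k+1} + 1` times in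
`(v₀(1), …, v₀(f(n)))`; the `q_k - q_{k-1} + 1 + j` factors of `B` occur there exactly
`a_{k+1}` times, and the `j + 1` factors of `C` occur there exactly once.
(Here `qd α (k+1) = q_k`, `qd α k = q_{k-1}`, `pq α k = a_{k+1}`.) -/
theorem factor_classification (α : ℝ) (hirr : Irrational α) (h0 : 0 < α) (h1 : α < 1)
    (k j n : ℕ) (hk : 1 ≤ k) (hj : j ≤ qd α k - 1) (hn : n = qd α (k + 1) + j)
    (hn2 : 2 ≤ n) :
    ∃ A B C : Set (List Bool),
      A = {w : List Bool | w.length = n ∧ IsFactor α w ∧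
            OccursIn α w (qd α (k + 1) + qd α k - 2)} ∧
      (∀ w : List Bool, (w.length = n ∧ IsFactor α w) ↔ (w ∈ A ∨ w ∈ B ∨ w ∈ C)) ∧
      Disjoint A B ∧ Disjoint A C ∧ Disjoint B C ∧
      A.ncard = qd α k - 1 - j ∧
      B.ncard = qd α (k + 1) - qd α k + 1 + j ∧
      C.ncard = j + 1 ∧
      (∀ w ∈ A, occCount α w (exhaust α n) = pq α k + 1) ∧
      (∀ w ∈ B, occCount α w (exhaust α n) = pq α k) ∧
      (∀ w ∈ C, occCount α w (exhaust α n) = 1) := by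
  have hqk : 0 < qd α k := by
    obtain ⟨i, rfl⟩ := Nat.exists_eq_add_of_le' hk
    exact qd_pos hirr h0 h1 i
  have hj' : j + 1 ≤ qd α k := by omega
  have hadd := qd_add_le hirr h0 h1 k
  have hle := qd_le_succ hirr h0 h1 k
  have hjQ : qd α (k + 1) + j + 1 ≤ qd α (k + 2) := by omega
  have hiff : ∀ s t, s < qd α (k + 2) → t < qd α (k + 2) → (word α s n = word α t n ↔ _) :=
    fun s t hs ht => word_eq_word_iff (m := s) (m' := t) hirr h0 h1 hn hs ht
  have hinj : Set.InjOn (fun m => word α m n)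
      {s | s < qd α (k + 1) ∨ (qd α (k + 2) - 1 - j ≤ s ∧ s < qd α (k + 2))} := by
    intro s hs t ht hst
    simp only [Set.mem_ofPred_eq] at hs ht
    rcases (hiff s t (by omega) (by omega)).1 hst with h | ⟨ha, hb, hc⟩
    · exact h
    · rwa [Nat.mod_eq_of_lt (by omega), Nat.mod_eq_of_lt (by omega)] at hc
  have hA : {w : List Bool | w.length = n ∧ IsFactor α w ∧
      OccursIn α w (qd α (k + 1) + qd α k - 2)} =
      (fun m => word α m n) '' Set.Ico 0 (qd α k - 1 - j) := by
    ext w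
    constructor
    · rintro ⟨rfl, -, m, hm, hw⟩
      exact ⟨m, ⟨by omega, by omega⟩, hw.symm⟩
    · rintro ⟨m, ⟨-, hm⟩, rfl⟩
      refine ⟨length_word _ _ _, ⟨m, by rw [length_word]⟩, m, ?_, by rw [length_word]⟩
      rw [length_word]
      omega
  refine ⟨_, (fun m => word α m n) '' Set.Ico (qd α k - 1 - j) (qd α (k + 1)),
    (fun m => word α m n) '' Set.Ico (qd α (k + 2) - 1 - j) (qd α (k + 2)), rfl, ?_⟩
  rw [hA]
  have hsub : ∀ {a b : ℕ}, (b ≤ qd α (k + 1) ∨ (qd α (k + 2) - 1 - j ≤ a ∧ b ≤ qd α (k + 2))) →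
      Set.Ico a b ⊆
        {s | s < qd α (k + 1) ∨ (qd α (k + 2) - 1 - j ≤ s ∧ s < qd α (k + 2))} := by
    intro a b h s hs
    simp only [Set.mem_Ico, Set.mem_ofPred_eq] at hs ⊢
    omega
  have hsA := hsub (a := 0) (b := qd α k - 1 - j) (by omega)
  have hsB := hsub (a := qd α k - 1 - j) (b := qd α (k + 1)) (by omega)
  have hsC := hsub (a := qd α (k + 2) - 1 - j) (b := qd α (k + 2)) (by omega)
  have hdisj : ∀ {a b c d : ℕ}, b ≤ c → Disjoint (Set.Ico a b) (Set.Ico c d) := by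
    intro a b c d h
    rw [Set.disjoint_left]
    intro s hs ht
    simp only [Set.mem_Ico] at hs ht
    omega
  refine ⟨?_, (hdisj (by omega)).image hinj hsA hsB, (hdisj (by omega)).image hinj hsA hsC,
    (hdisj (by omega)).image hinj hsB hsC, ?_, ?_, ?_, ?_, ?_, ?_⟩
  · intro w
    constructor
    · rintro ⟨hw, m, hm⟩
      obtain ⟨s, hs, hsm⟩ := exists_word_eq hirr h0 h1 hn hjQ m
      rw [hw, ← hsm] at hm
      subst hm
      rcases hs with hs | hs
      · rcases lt_or_ge s (qd α k - 1 - j) with h | h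
        · exact Or.inl ⟨s, ⟨by omega, h⟩, rfl⟩
        · exact Or.inr (Or.inl ⟨s, ⟨h, hs⟩, rfl⟩)
      · exact Or.inr (Or.inr ⟨s, hs, rfl⟩)
    · rintro (⟨s, -, rfl⟩ | ⟨s, -, rfl⟩ | ⟨s, -, rfl⟩) <;>
        exact ⟨length_word _ _ _, s, by rw [length_word]⟩
  · rw [(hinj.mono hsA).ncard_image, Set.ncard_Ico_nat]
    omega
  · rw [(hinj.mono hsB).ncard_image, Set.ncard_Ico_nat]
    omega
  · rw [(hinj.mono hsC).ncard_image, Set.ncard_Ico_nat]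
    omega
  · rintro _ ⟨s, ⟨-, hs⟩, rfl⟩
    rw [occCount_word_of_lt_qd hirr h0 h1 hn hj' (by omega), if_pos hs]
  · rintro _ ⟨s, ⟨hs, hs'⟩, rfl⟩
    rw [occCount_word_of_lt_qd hirr h0 h1 hn hj' hs', if_neg (by omega), add_zero]
  · rintro _ ⟨s, ⟨hs, hs'⟩, rfl⟩
    exact occCount_word_of_tail hirr h0 h1 hn hjQ hs hs'

end
end
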